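/- Let η be a quadratic irrational, 0 < a < b < 1, and C > 0. Let J_{3,1}(N) be the number of representations N = p₁ + p₂ + p₃ with each pᵢ prime and a < {ηpᵢ} < b, and let I_{3,1}(N) be the total number of representations of N as a sum of three primes. Then J_{3,1}(N) = I_{3,1}(N) σ(N,a,b) + O(N² (log N)^{−C}), where σ(N,a,b) = Σ_{m∈ℤ} e^{2πim(ηN − 1.5(a+b))} sin³(πm(b−a))/(π³m³) (with (b−a)³ as the m=0 term). -/

import Mathlib

open Finset

def IsQuadraticIrrational (η : ℝ) : Prop :=
  Irrational η ∧ ∃ A B C : ℤ, A ≠ 0 ∧ (A : ℝ) * η ^ 2 + B * η + C = 0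

def primesUpTo (N : ℕ) : Finset ℕ := (Finset.range (N + 1)).filter Nat.Prime

/-- Number of representations N = p₁+p₂+p₃ with pᵢ prime and a < {ηpᵢ} < b. -/
noncomputable def J31 (η a b : ℝ) (N : ℕ) : ℕ :=
  ((primesUpTo N ×ˢ primesUpTo N ×ˢ primesUpTo N).filter fun t =>
      t.1 + t.2.1 + t.2.2 = N ∧
      (a < Int.fract (η * t.1) ∧ Int.fract (η * t.1) < b) ∧
      (a < Int.fract (η * t.2.1) ∧ Int.fract (η * t.2.1) < b) ∧
      (a < Int.fract (η * t.2.2) ∧ Int.fract (η * t.2.2) < b)).card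

/-- Total number of representations of N as a sum of three primes. -/
def I31 (N : ℕ) : ℕ :=
  ((primesUpTo N ×ˢ primesUpTo N ×ˢ primesUpTo N).filter fun t =>
      t.1 + t.2.1 + t.2.2 = N).card

noncomputable def sigmaTerm (η a b : ℝ) (N : ℕ) (m : ℤ) : ℂ :=
  if m = 0 then ((b - a) ^ 3 : ℝ)
  else Complex.exp (2 * Real.pi * Complex.I * m * (η * N - 1.5 * (a + b)))
        * (Real.sin (Real.pi * m * (b - a)) ^ 3 / (Real.pi ^ 3 * (m : ℝ) ^ 3))

noncomputable def sigmaSeries (η a b : ℝ) (N : ℕ) : ℂ := ∑' m : ℤ, sigmaTerm η a b N m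

/-!
Squeeze the indicator function of `(a, b)` modulo `1` between two trapezoids with sides of width
`≍ (log N)⁻ᶜ`. Their Fourier series converge absolutely, so up to an admissible error each
`w(ηpᵢ)` is a trigonometric polynomial in `ηpᵢ` of degree `(log N)^O(1)`, and `J₃,₁(N)` becomes a
combination of the sums of `e(m₁ηp₁ + m₂ηp₂ + m₃ηp₃)` over `p₁ + p₂ + p₃ = N`.

The diagonal terms `m₁ = m₂ = m₃ = m` are `I₃,₁(N) e(mηN)` and build up the series `σ(N, a, b)`.
In an off-diagonal term two frequencies differ, say by `k ≠ 0`, and the circle integral contains the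
exponential sum `S` over primes at both `α` and `α + kη`. By Vinogradov's estimate `S` is large only
near rationals with small denominator; if it were large at both points, then `η` itself would be
approximated by rationals too well for a number that is not Liouville. So one of the two factors
saves any power of `log N`, and Parseval handles the remaining factors of the integrand.
-/

namespace TernaryGoldbach

/-! ### The additive character -/

/-- The additive character `e(x) = exp (2πix)`, as a complex-valued function. -/
noncomputable def e (x : ℝ) : ℂ := Real.fourierChar x

lemma e_eq_exp (x : ℝ) : e x = Complex.exp (2 * Real.pi * Complex.I * x) := by
  rw [e, Real.fourierChar_apply]
  push_cast
  ring_nf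

lemma e_add (x y : ℝ) : e (x + y) = e x * e y := by
  simp [e, AddChar.map_add_eq_mul]

lemma e_zero : e 0 = 1 := by simp [e]

lemma norm_e (x : ℝ) : ‖e x‖ = 1 := Circle.norm_coe _

lemma e_intCast (n : ℤ) : e n = 1 := by
  rw [e_eq_exp, Complex.exp_eq_one_iff]
  exact ⟨n, by push_cast; ring⟩

lemma conj_e (x : ℝ) : (starRingEnd ℂ) (e x) = e (-x) := by
  rw [e, e, AddChar.map_neg_eq_inv, Circle.coe_inv_eq_conj]

lemma e_add_intCast (x : ℝ) (n : ℤ) : e (x + n) = e x := by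
  rw [e_add, e_intCast, mul_one]

lemma e_mul_natCast (x : ℝ) (n : ℕ) : e (x * n) = e x ^ n := by
  rw [mul_comm, ← nsmul_eq_mul, e, AddChar.map_nsmul_eq_pow, Circle.coe_pow, ← e]

lemma norm_e_sub_one (x : ℝ) : ‖e x - 1‖ = 2 * |Real.sin (Real.pi * x)| := by
  have h : e x = Complex.exp (Complex.I * (2 * Real.pi * x : ℝ)) := by
    rw [e_eq_exp]
    push_cast
    ring_nf
  rw [h, Complex.norm_exp_I_mul_ofReal_sub_one, norm_mul, Real.norm_two, Real.norm_eq_abs]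
  ring_nf

lemma norm_e_sub_one_le (x : ℝ) : ‖e x - 1‖ ≤ 2 * Real.pi * |x| := by
  have h : |Real.sin (Real.pi * x)| ≤ Real.pi * |x| :=
    Real.abs_sin_le_abs.trans_eq (by rw [abs_mul, abs_of_pos Real.pi_pos])
  linarith [norm_e_sub_one x]

lemma four_mul_abs_sub_round_le_norm_e_sub_one (x : ℝ) : 4 * |x - round x| ≤ ‖e x - 1‖ := by
  have h_shift : e x = e (x - round x) := by
    simpa using e_add_intCast (x - round x) (round x)
  rw [h_shift, norm_e_sub_one]
  have h_small : |Real.pi * (x - round x)| ≤ Real.pi / 2 := by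
    rw [abs_mul, abs_of_pos Real.pi_pos]
    nlinarith [Real.pi_pos, abs_sub_round x]
  have h_sin := Real.mul_abs_le_abs_sin h_small
  rw [abs_mul, abs_of_pos Real.pi_pos, ← mul_assoc, div_mul_cancel₀ _ Real.pi_ne_zero] at h_sin
  linarith

lemma norm_sum_Ioc_e_mul_le (β : ℝ) (A B : ℕ) :
    ‖∑ m ∈ Ioc A B, e (β * m)‖ * |β - round β| ≤ 1 / 2 := by
  rcases le_total B A with h | h
  · simp [Ioc_eq_empty_of_le h]
  have h_geom : (∑ m ∈ Ioc A B, e (β * m)) * (e β - 1) = e β ^ (B + 1) - e β ^ (A + 1) := by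
    simp_rw [e_mul_natCast, ← Ico_add_one_add_one_eq_Ioc]
    exact geom_sum_Ico_mul _ (by omega)
  have h_norm : ‖∑ m ∈ Ioc A B, e (β * m)‖ * ‖e β - 1‖ ≤ 2 := by
    rw [← norm_mul, h_geom]
    refine (norm_sub_le _ _).trans_eq ?_
    rw [norm_pow, norm_pow, norm_e, one_pow, one_pow]
    norm_num
  have := mul_le_mul_of_nonneg_left (four_mul_abs_sub_round_le_norm_e_sub_one β)
    (norm_nonneg (∑ m ∈ Ioc A B, e (β * m)))
  linarith

/-! ### Partial summation -/

section PartialSummation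

variable {E : Type*} [SeminormedAddCommGroup E] [NormedSpace ℝ E]

lemma sum_Ioc_smul_by_parts (w : ℕ → ℝ) (f : ℕ → E) {A B : ℕ} (hAB : A ≤ B) :
    ∑ m ∈ Ioc A B, w m • f m = w B • ∑ m ∈ Ioc A B, f m
      - ∑ m ∈ Ico A B, (w (m + 1) - w m) • ∑ i ∈ Ioc A m, f i := by
  induction B, hAB using Nat.le_induction with
  | base => simp
  | succ n hn ih =>
    rw [sum_Ioc_succ_top (by omega), ih, sum_Ioc_succ_top (by omega), sum_Ico_succ_top (by omega),
      sub_smul, smul_add]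
    abel

lemma norm_sum_Ioc_smul_le (w : ℕ → ℝ) (f : ℕ → E) {A B : ℕ} (hAB : A ≤ B) {G : ℝ}
    (hG : ∀ j, A ≤ j → j ≤ B → ‖∑ m ∈ Ioc A j, f m‖ ≤ G) :
    ‖∑ m ∈ Ioc A B, w m • f m‖ ≤ G * (|w B| + ∑ m ∈ Ico A B, |w (m + 1) - w m|) := by
  rw [sum_Ioc_smul_by_parts w f hAB, mul_add, mul_sum]
  refine (norm_sub_le _ _).trans (add_le_add ?_ (norm_sum_le_of_le _ fun m hm => ?_))
  · rw [norm_smul, Real.norm_eq_abs, mul_comm]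
    exact mul_le_mul_of_nonneg_right (hG B hAB le_rfl) (abs_nonneg _)
  · rw [mem_Ico] at hm
    rw [norm_smul, Real.norm_eq_abs, mul_comm]
    exact mul_le_mul_of_nonneg_right (hG m hm.1 hm.2.le) (abs_nonneg _)

lemma norm_sum_Ioc_smul_le_of_monotone {w : ℕ → ℝ} (hw : Monotone w) (hw0 : ∀ n, 0 ≤ w n)
    {f : ℕ → E} {A B : ℕ} (hAB : A ≤ B) {G : ℝ}
    (hG : ∀ j, A ≤ j → j ≤ B → ‖∑ m ∈ Ioc A j, f m‖ ≤ G) :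
    ‖∑ m ∈ Ioc A B, w m • f m‖ ≤ G * (2 * w B) := by
  have hG0 : 0 ≤ G := (norm_nonneg _).trans (hG A le_rfl hAB)
  have h_var : ∑ m ∈ Ico A B, |w (m + 1) - w m| = w B - w A := by
    rw [← sum_Ico_sub w hAB]
    exact sum_congr rfl fun m _ => abs_of_nonneg (sub_nonneg.2 (hw m.le_succ))
  refine (norm_sum_Ioc_smul_le w f hAB hG).trans (mul_le_mul_of_nonneg_left ?_ hG0)
  rw [h_var, abs_of_nonneg (hw0 B)]
  linarith [hw0 A]

lemma norm_sum_Ioc_smul_le_of_antitone {w : ℕ → ℝ} (hw : Antitone w) (hw0 : ∀ n, 0 ≤ w n)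
    {f : ℕ → E} {A B : ℕ} (hAB : A ≤ B) {G : ℝ}
    (hG : ∀ j, A ≤ j → j ≤ B → ‖∑ m ∈ Ioc A j, f m‖ ≤ G) :
    ‖∑ m ∈ Ioc A B, w m • f m‖ ≤ G * w A := by
  have hG0 : 0 ≤ G := (norm_nonneg _).trans (hG A le_rfl hAB)
  have h_var : ∑ m ∈ Ico A B, |w (m + 1) - w m| = -(w B - w A) := by
    rw [← sum_Ico_sub w hAB, ← sum_neg_distrib]
    exact sum_congr rfl fun m _ => abs_of_nonpos (sub_nonpos.2 (hw m.le_succ))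
  refine (norm_sum_Ioc_smul_le w f hAB hG).trans (mul_le_mul_of_nonneg_left ?_ hG0)
  rw [h_var, abs_of_nonneg (hw0 B)]
  linarith

end PartialSummation

lemma norm_sum_Ioc_natCast_mul_e_mul_le (β : ℝ) (A B : ℕ) :
    ‖∑ m ∈ Ioc A B, (m : ℂ) * e (β * m)‖ * |β - round β| ≤ B := by
  rcases le_total B A with h | h
  · simp [Ioc_eq_empty_of_le h]
  rcases (abs_nonneg (β - round β)).eq_or_lt with h0 | h0
  · simp [← h0]
  have h_parts := norm_sum_Ioc_smul_le_of_monotone (w := fun m => (m : ℝ)) Nat.mono_cast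
    (fun n => n.cast_nonneg) (f := fun m => e (β * m)) h (G := 1 / (2 * |β - round β|))
    fun j _ _ => by
      rw [le_div_iff₀ (by positivity)]
      linarith [norm_sum_Ioc_e_mul_le β A j]
  simp only [Complex.real_smul, Complex.ofReal_natCast] at h_parts
  rwa [show 1 / (2 * |β - round β|) * (2 * (B : ℝ)) = B / |β - round β| by field_simp,
    le_div_iff₀ h0] at h_parts

lemma norm_sum_Ioc_natCast_mul_e_le (β : ℝ) (A B : ℕ) :
    ‖∑ m ∈ Ioc A B, (m : ℂ) * e (β * m)‖ ≤ (B : ℝ) * B := by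
  calc _ ≤ ∑ _m ∈ Ioc A B, (B : ℝ) := norm_sum_le_of_le _ fun _ hm => by
        rw [norm_mul, norm_e, mul_one, Complex.norm_natCast]
        exact_mod_cast (mem_Ioc.1 hm).2
    _ ≤ _ := by
        rw [sum_const, Nat.card_Ioc, nsmul_eq_mul]
        gcongr
        omega

/-! ### Spacing of the multiples of a number with a good rational approximation -/

lemma sum_range_one_div_add_one_le (n : ℕ) :
    ∑ i ∈ range n, 1 / ((i : ℝ) + 1) ≤ 1 + Real.log n := by
  simpa [harmonic, one_div] using harmonic_le_one_add_log n

lemma sum_Ioc_one_div_le (A B : ℕ) : ∑ n ∈ Ioc A B, 1 / (n : ℝ) ≤ 1 + Real.log B := by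
  calc _ ≤ ∑ n ∈ Ioc 0 B, 1 / (n : ℝ) :=
        sum_le_sum_of_subset_of_nonneg (Ioc_subset_Ioc_left A.zero_le) fun n _ _ => by positivity
    _ = ∑ i ∈ range B, 1 / ((i : ℝ) + 1) := by
        rw [range_eq_Ico, ← Ico_add_one_add_one_eq_Ioc,
          ← sum_Ico_add' (fun n : ℕ => 1 / (n : ℝ)) 0 B 1]
        simp
    _ ≤ _ := sum_range_one_div_add_one_le B

/-- If the points `t i` fall into distinct cells of length `1 / (2 * q)`, then the `i`-th bound
`min X (1 / t i)` is summed over an arithmetic progression. -/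
lemma sum_le_of_injOn_floor {ι : Type*} {P : Finset ι} {t F : ι → ℝ} {X : ℝ} {q : ℕ} (hX : 0 ≤ X)
    (ht0 : ∀ i, 0 ≤ t i) (ht : ∀ i, t i ≤ 1 / 2) (hinj : Set.InjOn (fun i => ⌊2 * q * t i⌋₊) P)
    (hFX : ∀ i, F i ≤ X) (hFt : ∀ i, F i * t i ≤ 1) :
    ∑ i ∈ P, F i ≤ X + 2 * q * (1 + Real.log q) := by
  let cellBound : ℕ → ℝ := fun j => if j = 0 then X else 2 * q / j
  let cell : ι → ℕ := fun i => ⌊2 * q * t i⌋₊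
  have h_cellBound : ∀ i, F i ≤ cellBound (cell i) := by
    intro i
    simp only [cellBound]
    split_ifs with h0
    · exact hFX i
    have h_cell : (cell i : ℝ) ≤ 2 * q * t i := Nat.floor_le (by have := ht0 i; positivity)
    have h_pos : (0 : ℝ) < cell i := by exact_mod_cast Nat.pos_of_ne_zero h0
    rw [le_div_iff₀ h_pos]
    rcases le_total (F i) 0 with hF | hF
    · exact (mul_nonpos_of_nonpos_of_nonneg hF h_pos.le).trans (by positivity)
    · calc F i * cell i ≤ F i * (2 * q * t i) := by gcongr
        _ = 2 * q * (F i * t i) := by ring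
        _ ≤ 2 * q * 1 := by gcongr; exact hFt i
        _ = _ := mul_one _
  have h_image : P.image cell ⊆ range (q + 1) := by
    refine image_subset_iff.2 fun i _ => mem_range_succ_iff.2 (Nat.floor_le_of_le ?_)
    nlinarith [ht i, q.cast_nonneg (α := ℝ)]
  calc ∑ i ∈ P, F i ≤ ∑ i ∈ P, cellBound (cell i) := sum_le_sum fun i _ => h_cellBound i
    _ = ∑ j ∈ P.image cell, cellBound j := (sum_image hinj).symm
    _ ≤ ∑ j ∈ range (q + 1), cellBound j :=
        sum_le_sum_of_subset_of_nonneg h_image fun j _ _ => by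
          simp only [cellBound]; split_ifs <;> positivity
    _ = 2 * q * (∑ j ∈ range q, 1 / ((j : ℝ) + 1)) + X := by
        rw [sum_range_succ', mul_sum]
        simp [cellBound, div_eq_mul_inv]
    _ ≤ X + 2 * q * (1 + Real.log q) := by
        rw [add_comm]
        gcongr
        exact sum_range_one_div_add_one_le q

section RationalApproximation

variable {α : ℝ} {r : ℚ}

lemma one_div_two_mul_den_le_abs_mul_sub (hr : |α - r| ≤ 1 / (r.den : ℝ) ^ 2) {d : ℤ} (hd : d ≠ 0)
    (hdr : 2 * |d| ≤ r.den) (z : ℤ) : 1 / (2 * (r.den : ℝ)) ≤ |α * d - z| := by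
  have hq : (0 : ℝ) < r.den := by exact_mod_cast r.den_pos
  have h_ne : r.num * d - z * r.den ≠ 0 := by
    intro h
    have h_dvd : (r.den : ℤ) ∣ d :=
      (Rat.isCoprime_num_den r).symm.dvd_of_dvd_mul_left ⟨z, by linarith⟩
    have := Int.le_of_dvd (abs_pos.2 hd) ((dvd_abs _ _).2 h_dvd)
    have := abs_pos.2 hd
    omega
  have h_rat : 1 / (r.den : ℝ) ≤ |(r : ℝ) * d - z| := by
    have h_one : (1 : ℝ) ≤ |(r.num : ℝ) * d - z * r.den| := by exact_mod_cast Int.one_le_abs h_ne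
    have h_eq : (r : ℝ) * d - z = ((r.num : ℝ) * d - z * r.den) / r.den := by
      rw [Rat.cast_def]
      field_simp
    rw [h_eq, abs_div, abs_of_pos hq]
    gcongr
  have h_err : |(α - r) * d| ≤ 1 / (2 * (r.den : ℝ)) := by
    have hd' : |(d : ℝ)| ≤ r.den / 2 := by
      rw [le_div_iff₀ two_pos, mul_comm]
      exact_mod_cast hdr
    calc |(α - r) * d| ≤ 1 / (r.den : ℝ) ^ 2 * (r.den / 2) := by rw [abs_mul]; gcongr
      _ = _ := by field_simp
  have h_tri := abs_sub (α * d - z) ((α - r) * d)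
  rw [show α * d - z - (α - r) * d = (r : ℝ) * d - z by ring] at h_tri
  have h_half : 1 / (r.den : ℝ) = 1 / (2 * r.den) + 1 / (2 * r.den) := by field_simp; norm_num
  linarith

lemma injOn_floor_two_mul_den_mul (hr : |α - r| ≤ 1 / (r.den : ℝ) ^ 2) {P : Finset ℕ}
    (hP : ∀ h ∈ P, ∀ h' ∈ P, 2 * |(h : ℤ) - h'| ≤ r.den) {ε : ℝ} (hε : |ε| = 1)
    (hsign : ∀ h ∈ P, |α * h - round (α * h)| = ε * (α * h - round (α * h))) :
    Set.InjOn (fun h : ℕ => ⌊2 * r.den * |α * h - round (α * h)|⌋₊) P := by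
  intro h hh h' hh' hcell
  by_contra hne
  have h_close : |2 * r.den * (|α * h - round (α * h)|) - 2 * r.den * (|α * h' - round (α * h')|)|
      < 1 := by
    refine Int.abs_sub_lt_one_of_floor_eq_floor ?_
    rw [← Int.natCast_floor_eq_floor (by positivity), ← Int.natCast_floor_eq_floor (by positivity)]
    exact_mod_cast hcell
  have h_eq : 2 * (r.den : ℝ) * |α * h - round (α * h)| - 2 * r.den * |α * h' - round (α * h')|
      = ε * (2 * r.den *
          (α * ((h - h' : ℤ) : ℝ) - ((round (α * h) - round (α * h') : ℤ) : ℝ))) := by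
    rw [hsign h hh, hsign h' hh']
    push_cast
    ring
  rw [h_eq, abs_mul, hε, one_mul, abs_mul, abs_of_pos (by positivity)] at h_close
  have h_far := one_div_two_mul_den_le_abs_mul_sub hr (d := h - h') (by omega) (hP h hh h' hh')
    (round (α * h) - round (α * h'))
  rw [div_le_iff₀ (by positivity)] at h_far
  linarith

lemma sum_Ico_le_of_mul_abs_sub_round_le (hr : |α - r| ≤ 1 / (r.den : ℝ) ^ 2) (k : ℕ) {l : ℕ}
    (hl : 2 * l ≤ r.den + 2) {F : ℕ → ℝ} {X : ℝ} (hX : 0 ≤ X) (hFX : ∀ h, F h ≤ X)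
    (hF : ∀ h : ℕ, F h * |α * h - round (α * h)| ≤ 1) :
    ∑ h ∈ Ico k (k + l), F h ≤ 2 * X + 4 * r.den * (1 + Real.log r.den) := by
  let nonnegSide : ℕ → Prop := fun h => 0 ≤ α * h - round (α * h)
  have h_diff : ∀ h ∈ Ico k (k + l), ∀ h' ∈ Ico k (k + l), 2 * |(h : ℤ) - h'| ≤ r.den := by
    intro h hh h' hh'
    rw [mem_Ico] at hh hh'
    have : |(h : ℤ) - h'| ≤ l - 1 := by rw [abs_le]; omega
    omega
  have h_one_sided : ∀ {P : Finset ℕ} {ε : ℝ}, P ⊆ Ico k (k + l) → |ε| = 1 →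
      (∀ h ∈ P, |α * h - round (α * h)| = ε * (α * h - round (α * h))) →
      ∑ h ∈ P, F h ≤ X + 2 * r.den * (1 + Real.log r.den) := fun hP hε hsign =>
    sum_le_of_injOn_floor hX (fun _ => abs_nonneg _) (fun _ => abs_sub_round _)
      (injOn_floor_two_mul_den_mul hr (fun h hh h' hh' => h_diff h (hP hh) h' (hP hh')) hε hsign)
      hFX hF
  have h_nonneg := h_one_sided (filter_subset nonnegSide _) abs_one fun h hh => by
    rw [one_mul, abs_of_nonneg (mem_filter.1 hh).2]
  have h_neg := h_one_sided (ε := -1) (filter_subset (fun h => ¬nonnegSide h) _) (by simp)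
    fun h hh => by rw [neg_one_mul, abs_of_neg (not_le.1 (mem_filter.1 hh).2)]
  rw [← sum_filter_add_sum_filter_not (Ico k (k + l)) nonnegSide]
  linarith

lemma sum_range_le_of_mul_abs_sub_round_le (hr : |α - r| ≤ 1 / (r.den : ℝ) ^ 2) (n : ℕ)
    {F : ℕ → ℝ} {X : ℝ} (hF0 : ∀ h, 0 ≤ F h) (hFX : ∀ h, F h ≤ X)
    (hF : ∀ h : ℕ, F h * |α * h - round (α * h)| ≤ 1) :
    ∑ h ∈ range n, F h ≤ (2 * n / r.den + 1) * (2 * X + 4 * r.den * (1 + Real.log r.den)) := by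
  have hq : (0 : ℝ) < r.den := by exact_mod_cast r.den_pos
  have hX : 0 ≤ X := (hF0 0).trans (hFX 0)
  set l := r.den / 2 + 1
  have h_blocks : ∀ K : ℕ,
      ∑ h ∈ range (l * K), F h ≤ K * (2 * X + 4 * r.den * (1 + Real.log r.den)) := by
    intro K
    induction K with
    | zero => simp
    | succ K ih =>
      have := sum_Ico_le_of_mul_abs_sub_round_le hr (l * K) (l := l) (by omega) hX hFX hF
      rw [mul_add, mul_one, ← sum_range_add_sum_Ico _ (Nat.le_add_right (l * K) l)]
      push_cast
      linarith
  have h_cover : n ≤ l * (n / l + 1) := (Nat.lt_mul_div_succ n (by omega)).le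
  have h_count : ((n / l : ℕ) : ℝ) ≤ 2 * n / r.den := by
    have h_half : (r.den : ℝ) ≤ 2 * l := by
      have : r.den ≤ 2 * l := by omega
      exact_mod_cast this
    refine Nat.cast_div_le.trans ?_
    rw [div_le_div_iff₀ (by positivity) hq]
    nlinarith [n.cast_nonneg (α := ℝ)]
  calc ∑ h ∈ range n, F h ≤ ∑ h ∈ range (l * (n / l + 1)), F h :=
        sum_le_sum_of_subset_of_nonneg (range_subset_range.2 h_cover) fun j _ _ => hF0 j
    _ ≤ ((n / l + 1 : ℕ) : ℝ) * (2 * X + 4 * r.den * (1 + Real.log r.den)) := h_blocks _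
    _ ≤ _ := by
      push_cast
      gcongr

lemma sum_norm_sum_natCast_mul_e_le (hr : |α - r| ≤ 1 / (r.den : ℝ) ^ 2) (U x : ℕ) {n : ℕ}
    (hn : 0 < n) :
    ∑ h ∈ range n, ‖∑ m ∈ Ioc U (x / n), (m : ℂ) * e (α * h * m)‖ ≤
      (x : ℝ) / n * ((2 * n / r.den + 1) *
        (2 * ((x : ℝ) / n) + 4 * r.den * (1 + Real.log r.den))) := by
  rcases x.eq_zero_or_pos with rfl | hx
  · simp
  have hX : (0 : ℝ) < (x : ℝ) / n := by positivity
  have h_floor : ((x / n : ℕ) : ℝ) ≤ (x : ℝ) / n := Nat.cast_div_le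
  have h_sum := sum_range_le_of_mul_abs_sub_round_le hr n
    (F := fun h => ‖∑ m ∈ Ioc U (x / n), (m : ℂ) * e (α * h * m)‖ / ((x : ℝ) / n))
    (X := (x : ℝ) / n) (fun _ => by positivity)
    (fun _ => by
      rw [div_le_iff₀ hX]
      exact (norm_sum_Ioc_natCast_mul_e_le _ _ _).trans (by gcongr))
    (fun _ => by
      rw [div_mul_eq_mul_div, div_le_one hX]
      exact (norm_sum_Ioc_natCast_mul_e_mul_le _ _ _).trans h_floor)
  rwa [← sum_div, div_le_iff₀' hX] at h_sum

end RationalApproximation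

/-! ### Bilinear sums -/

section BilinearSums

variable {ι : Type*}

lemma sq_sum_le_sum_one_div_mul_sum_mul_sq {s : Finset ι} {w : ι → ℝ} (hw : ∀ i ∈ s, 0 < w i)
    (F : ι → ℝ) : (∑ i ∈ s, F i) ^ 2 ≤ (∑ i ∈ s, 1 / w i) * ∑ i ∈ s, w i * F i ^ 2 :=
  sum_sq_le_sum_mul_sum_of_sq_le_mul s (fun i hi => by have := hw i hi; positivity)
    (fun i hi => by have := hw i hi; positivity)
    (fun i hi => by have := (hw i hi).ne'; field_simp; rfl)

lemma sum_sum_le_two_mul_sum_sum_filter_le [LinearOrder ι] (s : Finset ι) {K : ι → ι → ℝ}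
    (hK0 : ∀ i j, 0 ≤ K i j) (hK : ∀ i j, K i j = K j i) :
    ∑ i ∈ s, ∑ j ∈ s, K i j ≤ 2 * ∑ i ∈ s, ∑ j ∈ s with j ≤ i, K i j := by
  calc ∑ i ∈ s, ∑ j ∈ s, K i j
      ≤ ∑ i ∈ s, ∑ j ∈ s, ((if j ≤ i then K i j else 0) + if i ≤ j then K j i else 0) := by
        refine sum_le_sum fun i _ => sum_le_sum fun j _ => ?_
        rcases le_total j i with h | h
        · rw [if_pos h]
          split_ifs <;> linarith [hK0 i j, hK0 j i, hK i j]
        · rw [if_pos h, ← hK]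
          split_ifs <;> linarith [hK0 i j, hK0 j i, hK i j]
    _ = 2 * ∑ i ∈ s, ∑ j ∈ s with j ≤ i, K i j := by
        simp_rw [sum_add_distrib, sum_filter]
        rw [sum_comm (f := fun i j => if i ≤ j then K j i else 0), two_mul]

lemma sum_mul_norm_sum_sq_le_sum_sum_norm {κ : Type*} (s : Finset ι) (t : Finset κ) {w : ι → ℝ}
    (hw : ∀ i, 0 ≤ w i) (g : ι → κ → ℂ) :
    ∑ i ∈ s, w i * ‖∑ j ∈ t, g i j‖ ^ 2 ≤
      ∑ j ∈ t, ∑ k ∈ t, ‖∑ i ∈ s, (w i : ℂ) * (g i j * (starRingEnd ℂ) (g i k))‖ := by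
  have h_expand : ((∑ i ∈ s, w i * ‖∑ j ∈ t, g i j‖ ^ 2 : ℝ) : ℂ) =
      ∑ j ∈ t, ∑ k ∈ t, ∑ i ∈ s, (w i : ℂ) * (g i j * (starRingEnd ℂ) (g i k)) := by
    simp_rw [sum_comm (s := t) (t := s)]
    push_cast
    refine sum_congr rfl fun i _ => ?_
    simp_rw [← Complex.mul_conj', map_sum, sum_mul_sum, mul_sum]
  rw [← Real.norm_of_nonneg (sum_nonneg fun i _ => mul_nonneg (hw i) (sq_nonneg _)),
    ← Complex.norm_real, h_expand]
  exact norm_sum_le_of_le _ fun j _ => norm_sum_le _ _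

lemma Ioc_div_eq_filter_mul_le (U x : ℕ) {m : ℕ} (hm : 0 < m) :
    Ioc U (x / m) = {n ∈ Ioc U x | m * n ≤ x} := by
  ext n
  rw [mem_filter, mem_Ioc, mem_Ioc, Nat.le_div_iff_mul_le hm, mul_comm n m]
  have := Nat.le_mul_of_pos_left n hm
  constructor <;> rintro ⟨h₁, h₂⟩ <;> constructor <;> omega

/-- The summand `y n e(αmn)` cut off to the region `m * n ≤ x` under the hyperbola, so that sums
over that region become sums over a rectangle. -/
noncomputable def hyperbolicTerm (α : ℝ) (x : ℕ) (y : ℕ → ℂ) (m n : ℕ) : ℂ :=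
  if m * n ≤ x then y n * e (α * (m * n)) else 0

lemma sum_Ioc_hyperbolicTerm (α : ℝ) (U x : ℕ) (y : ℕ → ℂ) {m : ℕ} (hm : 0 < m) :
    ∑ n ∈ Ioc U x, hyperbolicTerm α x y m n = ∑ n ∈ Ioc U (x / m), y n * e (α * (m * n)) := by
  rw [Ioc_div_eq_filter_mul_le U x hm, sum_filter]
  rfl

lemma norm_sum_mul_hyperbolicTerm_mul_conj_le (α : ℝ) {U x : ℕ} {y : ℕ → ℂ} {Y : ℝ}
    (hy : ∀ n ∈ Ioc U x, ‖y n‖ ≤ Y) {n k : ℕ} (hn : n ∈ Ioc U x) (hk : k ∈ Ioc U x)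
    (hkn : k ≤ n) :
    ‖∑ m ∈ Ioc U x, ((m : ℝ) : ℂ) *
        (hyperbolicTerm α x y m n * (starRingEnd ℂ) (hyperbolicTerm α x y m k))‖ ≤
      Y ^ 2 * ‖∑ m ∈ Ioc U (x / n), (m : ℂ) * e (α * (n - k : ℕ) * m)‖ := by
  have h_factor : ∑ m ∈ Ioc U x, ((m : ℝ) : ℂ) *
      (hyperbolicTerm α x y m n * (starRingEnd ℂ) (hyperbolicTerm α x y m k))
      = (y n * (starRingEnd ℂ) (y k)) *
        ∑ m ∈ Ioc U (x / n), (m : ℂ) * e (α * (n - k : ℕ) * m) := by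
    rw [Ioc_div_eq_filter_mul_le U x (by grind : 0 < n), sum_filter, mul_sum]
    refine sum_congr rfl fun m _ => ?_
    unfold hyperbolicTerm
    by_cases hmn : m * n ≤ x
    · have hmk : m * k ≤ x := (Nat.mul_le_mul_left m hkn).trans hmn
      rw [if_pos hmn, if_pos hmk, if_pos (by rwa [mul_comm]), map_mul, conj_e]
      have h_phase : e (α * (n - k : ℕ) * m) = e (α * (m * n)) * e (-(α * (m * k))) := by
        rw [← e_add, Nat.cast_sub hkn]
        ring_nf
      rw [h_phase]
      push_cast
      ring
    · rw [if_neg hmn, if_neg (by rwa [mul_comm] : ¬ n * m ≤ x)]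
      simp
  rw [h_factor, norm_mul, norm_mul, RCLike.norm_conj, sq]
  gcongr
  · exact (norm_nonneg _).trans (hy n hn)
  · exact hy n hn
  · exact hy k hk

lemma sum_natCast_mul_norm_sum_sq_le (α : ℝ) (U x : ℕ) {y : ℕ → ℂ} {Y : ℝ}
    (hy : ∀ n ∈ Ioc U x, ‖y n‖ ≤ Y) :
    ∑ m ∈ Ioc U x, (m : ℝ) * ‖∑ n ∈ Ioc U (x / m), y n * e (α * (m * n))‖ ^ 2 ≤
      2 * Y ^ 2 *
        ∑ n ∈ Ioc U x, ∑ h ∈ range n, ‖∑ m ∈ Ioc U (x / n), (m : ℂ) * e (α * h * m)‖ := by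
  let g := hyperbolicTerm α x y
  let corr : ℕ → ℕ → ℝ := fun n k =>
    ‖∑ m ∈ Ioc U x, ((m : ℝ) : ℂ) * (g m n * (starRingEnd ℂ) (g m k))‖
  let shift : ℕ → ℕ → ℝ := fun n h => ‖∑ m ∈ Ioc U (x / n), (m : ℂ) * e (α * h * m)‖
  have h_corr_symm : ∀ n k, corr n k = corr k n := by
    intro n k
    simp only [corr]
    rw [← RCLike.norm_conj, map_sum]
    congr 1
    refine sum_congr rfl fun m _ => ?_
    rw [map_mul, map_mul, Complex.conj_ofReal, Complex.conj_conj, mul_comm (g m k)]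
  have h_reindex : ∀ n, ∑ k ∈ Ioc U x with k ≤ n, shift n (n - k) ≤ ∑ h ∈ range n, shift n h := by
    intro n
    have h_inj : Set.InjOn (fun k => n - k) ({k ∈ Ioc U x | k ≤ n} : Finset ℕ) := by
      intro i hi j hj hij
      have := (mem_filter.1 hi).2
      have := (mem_filter.1 hj).2
      simp only at hij
      omega
    rw [← sum_image (f := shift n) h_inj]
    refine sum_le_sum_of_subset_of_nonneg (image_subset_iff.2 fun k hk => ?_)
      fun h _ _ => norm_nonneg _
    grind
  calc ∑ m ∈ Ioc U x, (m : ℝ) * ‖∑ n ∈ Ioc U (x / m), y n * e (α * (m * n))‖ ^ 2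
      = ∑ m ∈ Ioc U x, (m : ℝ) * ‖∑ n ∈ Ioc U x, g m n‖ ^ 2 := sum_congr rfl fun m hm => by
        rw [← sum_Ioc_hyperbolicTerm α U x y (by grind : 0 < m)]
    _ ≤ ∑ n ∈ Ioc U x, ∑ k ∈ Ioc U x, corr n k :=
        sum_mul_norm_sum_sq_le_sum_sum_norm _ _ (fun m => m.cast_nonneg) g
    _ ≤ 2 * ∑ n ∈ Ioc U x, ∑ k ∈ Ioc U x with k ≤ n, corr n k :=
        sum_sum_le_two_mul_sum_sum_filter_le _ (fun _ _ => norm_nonneg _) h_corr_symm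
    _ ≤ 2 * ∑ n ∈ Ioc U x, ∑ k ∈ Ioc U x with k ≤ n, Y ^ 2 * shift n (n - k) := by
        gcongr with n hn k hk
        exact norm_sum_mul_hyperbolicTerm_mul_conj_le α hy hn (mem_filter.1 hk).1
          (mem_filter.1 hk).2
    _ ≤ 2 * ∑ n ∈ Ioc U x, Y ^ 2 * ∑ h ∈ range n, shift n h := by
        simp_rw [← mul_sum]
        gcongr with n
        exact h_reindex n
    _ = _ := by rw [← mul_sum]; ring

end BilinearSums

section RationalApproximation

variable {α : ℝ} {r : ℚ}

lemma sum_norm_sum_natCast_mul_e_le_of_lt (hr : |α - r| ≤ 1 / (r.den : ℝ) ^ 2) {U x n : ℕ}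
    (hU : 0 < U) (hUr : U ≤ r.den) (hUn : U < n) {ℓ : ℝ} (hℓ : 1 + Real.log r.den ≤ ℓ) :
    ∑ h ∈ range n, ‖∑ m ∈ Ioc U (x / n), (m : ℂ) * e (α * h * m)‖ ≤
      ℓ * (6 * x ^ 2 / U + 4 * r.den * x) * (1 / n) + 8 * x * ℓ := by
  have hn : (0 : ℝ) < n := by exact_mod_cast hU.trans hUn
  have hℓ1 : 1 ≤ ℓ := by linarith [Real.log_natCast_nonneg r.den]
  refine (sum_norm_sum_natCast_mul_e_le hr U x (hU.trans hUn)).trans ?_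
  have h_expand : (x : ℝ) / n * ((2 * n / r.den + 1) *
      (2 * ((x : ℝ) / n) + 4 * r.den * (1 + Real.log r.den)))
      = (4 * (x ^ 2 / r.den) + 2 * (x ^ 2 / n) + 4 * r.den * x * (1 + Real.log r.den)) * (1 / n)
        + 8 * x * (1 + Real.log r.den) := by
    field_simp
    ring
  rw [h_expand]
  have h_den : (x : ℝ) ^ 2 / r.den ≤ ℓ * (x ^ 2 / U) := by
    refine le_trans ?_ (le_mul_of_one_le_left (by positivity) hℓ1)
    gcongr
  have h_n : (x : ℝ) ^ 2 / n ≤ ℓ * (x ^ 2 / U) := by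
    refine le_trans ?_ (le_mul_of_one_le_left (by positivity) hℓ1)
    gcongr
  gcongr
  calc _ ≤ 4 * (ℓ * ((x : ℝ) ^ 2 / U)) + 2 * (ℓ * (x ^ 2 / U)) + 4 * r.den * x * ℓ := by gcongr
    _ = _ := by ring

lemma sum_sum_norm_sum_natCast_mul_e_le (hr : |α - r| ≤ 1 / (r.den : ℝ) ^ 2) {U x : ℕ}
    (hU : 0 < U) (hUr : U ≤ r.den) {ℓ : ℝ} (hℓx : 1 + Real.log x ≤ ℓ)
    (hℓr : 1 + Real.log r.den ≤ ℓ) :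
    ∑ n ∈ Ioc U x, ∑ h ∈ range n, ‖∑ m ∈ Ioc U (x / n), (m : ℂ) * e (α * h * m)‖ ≤
      ℓ ^ 2 * (14 * x ^ 2 / U + 4 * r.den * x) := by
  have hℓ1 : 1 ≤ ℓ := by linarith [Real.log_natCast_nonneg r.den]
  have h_sub : Ioc U (x / U) ⊆ Ioc U x := Ioc_subset_Ioc_right (Nat.div_le_self _ _)
  have h_empty : ∀ n ∈ Ioc U x, n ∉ Ioc U (x / U) →
      ∑ h ∈ range n, ‖∑ m ∈ Ioc U (x / n), (m : ℂ) * e (α * h * m)‖ = 0 := by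
    intro n hn hn'
    rw [mem_Ioc] at hn hn'
    have h_lt : x / U < n := by omega
    have h_le : x / n < U :=
      (Nat.div_lt_iff_lt_mul (hU.trans hn.1)).2 (by rwa [mul_comm, ← Nat.div_lt_iff_lt_mul hU])
    simp [Ioc_eq_empty_of_le h_le.le]
  have h_harm : ∑ n ∈ Ioc U (x / U), 1 / (n : ℝ) ≤ ℓ :=
    (sum_le_sum_of_subset_of_nonneg h_sub fun n _ _ => by positivity).trans
      ((sum_Ioc_one_div_le U x).trans hℓx)
  have h_card : ((x / U - U : ℕ) : ℝ) ≤ x / U :=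
    (Nat.cast_le.2 (Nat.sub_le _ _)).trans Nat.cast_div_le
  rw [← sum_subset h_sub h_empty]
  calc _ ≤ ∑ n ∈ Ioc U (x / U),
          (ℓ * (6 * x ^ 2 / U + 4 * r.den * x) * (1 / (n : ℝ)) + 8 * x * ℓ) :=
        sum_le_sum fun n hn => sum_norm_sum_natCast_mul_e_le_of_lt hr hU hUr (mem_Ioc.1 hn).1 hℓr
    _ = ℓ * (6 * x ^ 2 / U + 4 * r.den * x) * ∑ n ∈ Ioc U (x / U), 1 / (n : ℝ)
          + (x / U - U : ℕ) * (8 * x * ℓ) := by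
        rw [sum_add_distrib, ← mul_sum, sum_const, Nat.card_Ioc, nsmul_eq_mul]
    _ ≤ ℓ * (6 * x ^ 2 / U + 4 * r.den * x) * ℓ + x / U * (8 * x * ℓ) * ℓ := by
        have h_le : ((x / U - U : ℕ) : ℝ) * (8 * x * ℓ) ≤ x / U * (8 * x * ℓ) := by gcongr
        exact add_le_add (by gcongr) (h_le.trans (le_mul_of_one_le_right (by positivity) hℓ1))
    _ = _ := by ring

/-- Vinogradov's bilinear estimate: Cauchy–Schwarz with the weights `m` turns the inner sums into
geometric sums over `m` with ratio `e(αh)`. -/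
lemma norm_sum_sum_mul_e_sq_le (hr : |α - r| ≤ 1 / (r.den : ℝ) ^ 2) {U x : ℕ} (hU : 0 < U)
    (hUr : U ≤ r.den) {ℓ : ℝ} (hℓx : 1 + Real.log x ≤ ℓ) (hℓr : 1 + Real.log r.den ≤ ℓ)
    {c y : ℕ → ℂ} {Y : ℝ} (hc : ∀ m, ‖c m‖ ≤ 1) (hy : ∀ n ∈ Ioc U x, ‖y n‖ ≤ Y) :
    ‖∑ m ∈ Ioc U x, ∑ n ∈ Ioc U (x / m), c m * y n * e (α * (m * n))‖ ^ 2 ≤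
      ℓ ^ 3 * Y ^ 2 * (28 * x ^ 2 / U + 8 * r.den * x) := by
  have hℓ0 : 0 ≤ ℓ := by linarith [Real.log_natCast_nonneg r.den]
  let inner : ℕ → ℂ := fun m => ∑ n ∈ Ioc U (x / m), y n * e (α * (m * n))
  have h_inner : ‖∑ m ∈ Ioc U x, ∑ n ∈ Ioc U (x / m), c m * y n * e (α * (m * n))‖ ≤
      ∑ m ∈ Ioc U x, ‖inner m‖ := norm_sum_le_of_le _ fun m _ => by
    simp_rw [mul_assoc, ← mul_sum, norm_mul]
    exact mul_le_of_le_one_left (norm_nonneg _) (hc m)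
  calc _ ≤ (∑ m ∈ Ioc U x, ‖inner m‖) ^ 2 := by gcongr
    _ ≤ (∑ m ∈ Ioc U x, 1 / (m : ℝ)) * ∑ m ∈ Ioc U x, (m : ℝ) * ‖inner m‖ ^ 2 :=
        sq_sum_le_sum_one_div_mul_sum_mul_sq
          (fun m hm => by exact_mod_cast (by grind : 0 < m)) _
    _ ≤ ℓ * (2 * Y ^ 2 * (ℓ ^ 2 * (14 * x ^ 2 / U + 4 * r.den * x))) := by
        gcongr
        · exact (sum_Ioc_one_div_le U x).trans hℓx
        · refine (sum_natCast_mul_norm_sum_sq_le α U x hy).trans ?_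
          gcongr
          exact sum_sum_norm_sum_natCast_mul_e_le hr hU hUr hℓx hℓr
    _ = _ := by ring

end RationalApproximation

/-! ### Vaughan's identity -/

section Vaughan

open ArithmeticFunction hiding log
open scoped ArithmeticFunction.Moebius ArithmeticFunction.zeta

lemma monotone_log_natCast : Monotone fun n : ℕ => Real.log n := by
  intro m n hmn
  rcases m.eq_zero_or_pos with rfl | hm
  · simpa using Real.log_natCast_nonneg n
  · exact Real.log_le_log (by exact_mod_cast hm) (by exact_mod_cast hmn)

section Truncation

variable {R : Type*} [Zero R]

/-- The arithmetic function `f` cut off to the arguments `n ≤ U`, as in the "type I" pieces of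
Vaughan's identity. -/
def truncLE (U : ℕ) (f : ArithmeticFunction R) : ArithmeticFunction R :=
  ⟨fun n => if n ≤ U then f n else 0, by simp⟩

/-- The arithmetic function `f` cut off to the arguments `n > U`, as in the "type II" piece of
Vaughan's identity. -/
def truncGT (U : ℕ) (f : ArithmeticFunction R) : ArithmeticFunction R :=
  ⟨fun n => if n ≤ U then 0 else f n, by simp⟩

lemma truncLE_of_lt (f : ArithmeticFunction R) {U n : ℕ} (h : U < n) : truncLE U f n = 0 :=
  if_neg h.not_ge

lemma truncGT_of_le (f : ArithmeticFunction R) {U n : ℕ} (h : n ≤ U) : truncGT U f n = 0 :=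
  if_pos h

end Truncation

lemma truncLE_add_truncGT {R : Type*} [AddMonoid R] (U : ℕ) (f : ArithmeticFunction R) :
    truncLE U f + truncGT U f = f := by
  ext n
  change (if n ≤ U then f n else 0) + (if n ≤ U then 0 else f n) = f n
  split_ifs <;> simp

lemma norm_truncLE_le (U : ℕ) (f : ArithmeticFunction ℝ) (n : ℕ) : ‖truncLE U f n‖ ≤ ‖f n‖ := by
  change ‖if n ≤ U then f n else 0‖ ≤ _
  split_ifs <;> simp

lemma norm_truncGT_le (U : ℕ) (f : ArithmeticFunction ℝ) (n : ℕ) : ‖truncGT U f n‖ ≤ ‖f n‖ := by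
  change ‖if n ≤ U then 0 else f n‖ ≤ _
  split_ifs <;> simp

lemma truncLE_mul_truncLE_of_lt {R : Type*} [Semiring R] (f g : ArithmeticFunction R) {U n : ℕ}
    (h : U ^ 2 < n) : (truncLE U f * truncLE U g) n = 0 := by
  rw [mul_apply]
  refine sum_eq_zero fun p hp => ?_
  rcases le_or_gt p.1 U with h₁ | h₁
  · rcases le_or_gt p.2 U with h₂ | h₂
    · have := Nat.mul_le_mul h₁ h₂
      have := (Nat.mem_divisorsAntidiagonal.1 hp).1
      nlinarith
    · rw [truncLE_of_lt g h₂, mul_zero]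
  · rw [truncLE_of_lt f h₁, zero_mul]

lemma truncGT_mul_of_le {R : Type*} [Semiring R] (f g : ArithmeticFunction R) {U n : ℕ}
    (h : n ≤ U) : (truncGT U f * g) n = 0 := by
  rw [mul_apply]
  refine sum_eq_zero fun p hp => ?_
  rw [truncGT_of_le f ((Nat.divisor_le (Nat.fst_mem_divisors_of_mem_antidiagonal hp)).trans h),
    zero_mul]

lemma vonMangoldt_eq_vaughan (U : ℕ) :
    Λ = truncLE U Λ + truncLE U (μ : ArithmeticFunction ℝ) * ArithmeticFunction.log
      - truncLE U (μ : ArithmeticFunction ℝ) * truncLE U Λ * (ζ : ArithmeticFunction ℝ)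
      + truncGT U (μ : ArithmeticFunction ℝ) * (truncGT U Λ * (ζ : ArithmeticFunction ℝ)) := by
  have h_moebius : (μ : ArithmeticFunction ℝ) * (ζ : ArithmeticFunction ℝ) = 1 :=
    coe_moebius_mul_coe_zeta
  have hΛ := truncLE_add_truncGT U Λ
  have hμ := truncLE_add_truncGT U (μ : ArithmeticFunction ℝ)
  rw [← vonMangoldt_mul_zeta]
  linear_combination hΛ * (truncLE U (μ : ArithmeticFunction ℝ) * (ζ : ArithmeticFunction ℝ) - 1)
    - truncGT U Λ * h_moebius - hμ * (truncGT U Λ * (ζ : ArithmeticFunction ℝ))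

lemma norm_mul_apply_le_log {f g : ArithmeticFunction ℝ} (hf : ∀ n, ‖f n‖ ≤ 1)
    (hg : ∀ n, ‖g n‖ ≤ Λ n) (n : ℕ) : ‖(f * g) n‖ ≤ Real.log n := by
  rw [← log_apply, ← zeta_mul_vonMangoldt, mul_apply, mul_apply]
  refine norm_sum_le_of_le _ fun p hp => ?_
  have hp1 : p.1 ≠ 0 := (Nat.ne_zero_of_mem_divisorsAntidiagonal hp).1
  rw [norm_mul, natCoe_apply, zeta_apply_ne hp1, Nat.cast_one]
  exact mul_le_mul (hf _) (hg _) (norm_nonneg _) zero_le_one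

lemma norm_vonMangoldt (n : ℕ) : ‖Λ n‖ = Λ n := Real.norm_of_nonneg vonMangoldt_nonneg

lemma norm_coe_moebius_le_one (n : ℕ) : ‖(μ : ArithmeticFunction ℝ) n‖ ≤ 1 := by
  rw [intCoe_apply, Real.norm_eq_abs]
  exact_mod_cast abs_moebius_le_one

lemma norm_coe_zeta_le_one (n : ℕ) : ‖(ζ : ArithmeticFunction ℝ) n‖ ≤ 1 := by
  rw [natCoe_apply, zeta_apply]
  split_ifs <;> simp

lemma norm_truncLE_moebius_le_one (U n : ℕ) : ‖truncLE U (μ : ArithmeticFunction ℝ) n‖ ≤ 1 :=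
  (norm_truncLE_le U _ n).trans (norm_coe_moebius_le_one n)

lemma sum_Ioc_mul_smul {R M : Type*} [Semiring R] [AddCommMonoid M] [Module R M]
    (f g : ArithmeticFunction R) (F : ℕ → M) (x : ℕ) :
    ∑ n ∈ Ioc 0 x, (f * g) n • F n =
      ∑ m ∈ Ioc 0 x, f m • ∑ n ∈ Ioc 0 (x / m), g n • F (m * n) := by
  calc ∑ n ∈ Ioc 0 x, (f * g) n • F n
      = ∑ n ∈ Ioc 0 x, ∑ p ∈ Ioc 0 x ×ˢ Ioc 0 x with p.1 * p.2 = n,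
          f p.1 • g p.2 • F (p.1 * p.2) := by
        refine sum_congr rfl fun n hn => ?_
        rw [mem_Ioc] at hn
        rw [mul_apply, Nat.divisorsAntidiagonal_eq_prod_filter_of_le hn.1.ne' hn.2, sum_smul]
        refine sum_congr rfl fun p hp => ?_
        rw [(mem_filter.1 hp).2, mul_smul]
    _ = ∑ p ∈ Ioc 0 x ×ˢ Ioc 0 x, if p.1 * p.2 ≤ x then f p.1 • g p.2 • F (p.1 * p.2) else 0 := by
        simp_rw [sum_filter]
        rw [sum_comm]
        refine sum_congr rfl fun p hp => ?_
        rw [sum_ite_eq]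
        grind [Nat.mul_pos]
    _ = _ := by
        rw [sum_product]
        refine sum_congr rfl fun m hm => ?_
        rw [← sum_filter, ← Ioc_div_eq_filter_mul_le 0 x (mem_Ioc.1 hm).1, smul_sum]

lemma norm_sum_Ioc_le_of_support {E : Type*} [SeminormedAddCommGroup E] {F : ℕ → E} {U x : ℕ}
    {G : ℝ} (hG : 0 ≤ G) (h : ∀ m ∈ Ioc 0 x, m ≤ U → ‖F m‖ ≤ G) (h0 : ∀ m, U < m → F m = 0) :
    ‖∑ m ∈ Ioc 0 x, F m‖ ≤ U * G := by
  have h_sub : Ioc 0 (min U x) ⊆ Ioc 0 x := Ioc_subset_Ioc_right (min_le_right U x)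
  rw [← sum_subset h_sub fun m hm hm' => h0 m (by grind)]
  calc _ ≤ ∑ _m ∈ Ioc 0 (min U x), G :=
        norm_sum_le_of_le _ fun m hm => h m (h_sub hm) (by grind)
    _ = (min U x : ℕ) * G := by simp
    _ ≤ U * G := by gcongr; exact min_le_left U x

end Vaughan

/-! ### The exponential sum over the von Mangoldt function -/

section VonMangoldtSum

open ArithmeticFunction hiding log
open scoped ArithmeticFunction.Moebius ArithmeticFunction.zeta

variable {α : ℝ} {r : ℚ}

lemma norm_sum_Ioc_e_mul_mul_le_den (hr : |α - r| ≤ 1 / (r.den : ℝ) ^ 2) {k : ℕ} (hk : 0 < k)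
    (hkr : 2 * k ≤ r.den) (A B : ℕ) : ‖∑ n ∈ Ioc A B, e (α * k * n)‖ ≤ r.den := by
  have h_dist : 1 / (2 * (r.den : ℝ)) ≤ |α * k - round (α * k)| := by
    simpa using one_div_two_mul_den_le_abs_mul_sub hr (d := k) (by omega)
      (by rw [Nat.abs_cast]; exact_mod_cast hkr) (round (α * k))
  have h := (mul_le_mul_of_nonneg_left h_dist (norm_nonneg _)).trans
    (norm_sum_Ioc_e_mul_le (α * k) A B)
  rw [mul_one_div, div_le_iff₀ (by positivity)] at h
  linarith

lemma norm_sum_Ioc_log_smul_e_mul_mul_le (hr : |α - r| ≤ 1 / (r.den : ℝ) ^ 2) {k : ℕ} (hk : 0 < k)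
    (hkr : 2 * k ≤ r.den) (B : ℕ) :
    ‖∑ n ∈ Ioc 0 B, Real.log n • e (α * k * n)‖ ≤ r.den * (2 * Real.log B) :=
  norm_sum_Ioc_smul_le_of_monotone monotone_log_natCast (fun n => Real.log_natCast_nonneg n)
    B.zero_le fun j _ _ => norm_sum_Ioc_e_mul_mul_le_den hr hk hkr 0 j

lemma norm_sum_truncLE_vonMangoldt_smul_e_le (α : ℝ) (U x : ℕ) :
    ‖∑ n ∈ Ioc 0 x, truncLE U Λ n • e (α * n)‖ ≤ U * Real.log x := by
  refine norm_sum_Ioc_le_of_support (Real.log_natCast_nonneg x) (fun m hm _ => ?_)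
    fun m hm => by rw [truncLE_of_lt _ hm, zero_smul]
  rw [norm_smul, norm_e, mul_one]
  calc _ ≤ Λ m := (norm_truncLE_le U Λ m).trans_eq (norm_vonMangoldt m)
    _ ≤ Real.log m := vonMangoldt_le_log
    _ ≤ Real.log x := monotone_log_natCast (mem_Ioc.1 hm).2

lemma norm_sum_truncLE_moebius_mul_log_smul_e_le (hr : |α - r| ≤ 1 / (r.den : ℝ) ^ 2) {U : ℕ}
    (hU : 2 * U ≤ r.den) (x : ℕ) :
    ‖∑ n ∈ Ioc 0 x, (truncLE U (μ : ArithmeticFunction ℝ) * ArithmeticFunction.log) n • e (α * n)‖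
      ≤ U * (r.den * (2 * Real.log x)) := by
  rw [sum_Ioc_mul_smul]
  refine norm_sum_Ioc_le_of_support (by positivity) (fun m hm hmU => ?_)
    fun m hm => by rw [truncLE_of_lt _ hm, zero_smul]
  have h_inner : ‖∑ n ∈ Ioc 0 (x / m), ArithmeticFunction.log n • e (α * (m * n : ℕ))‖ ≤
      r.den * (2 * Real.log (x / m : ℕ)) := by
    simpa only [log_apply, Nat.cast_mul, mul_assoc] using
      norm_sum_Ioc_log_smul_e_mul_mul_le hr (mem_Ioc.1 hm).1 (by omega) (x / m)
  rw [norm_smul]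
  refine (mul_le_of_le_one_left (norm_nonneg _) (norm_truncLE_moebius_le_one U m)).trans
    (h_inner.trans ?_)
  gcongr ?_ * (2 * ?_)
  exact monotone_log_natCast (Nat.div_le_self x m)

lemma norm_sum_truncLE_mul_truncLE_mul_zeta_smul_e_le (hr : |α - r| ≤ 1 / (r.den : ℝ) ^ 2)
    {U : ℕ} (hU : 2 * U ^ 2 ≤ r.den) (x : ℕ) :
    ‖∑ n ∈ Ioc 0 x, (truncLE U (μ : ArithmeticFunction ℝ) * truncLE U Λ *
        (ζ : ArithmeticFunction ℝ)) n • e (α * n)‖ ≤ (U ^ 2 : ℕ) * (Real.log x * r.den) := by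
  rw [sum_Ioc_mul_smul]
  refine norm_sum_Ioc_le_of_support (by positivity) (fun m hm hmU => ?_)
    fun m hm => by rw [truncLE_mul_truncLE_of_lt _ _ hm, zero_smul]
  have h_coeff : ‖(truncLE U (μ : ArithmeticFunction ℝ) * truncLE U Λ) m‖ ≤ Real.log x :=
    (norm_mul_apply_le_log (norm_truncLE_moebius_le_one U)
      (fun n => (norm_truncLE_le U Λ n).trans_eq (norm_vonMangoldt n)) m).trans
      (monotone_log_natCast (mem_Ioc.1 hm).2)
  have h_inner : ∑ n ∈ Ioc 0 (x / m), (ζ : ArithmeticFunction ℝ) n • e (α * (m * n : ℕ)) =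
      ∑ n ∈ Ioc 0 (x / m), e (α * m * n) := by
    refine sum_congr rfl fun n hn => ?_
    rw [natCoe_apply, zeta_apply_ne (mem_Ioc.1 hn).1.ne', Nat.cast_one, one_smul, Nat.cast_mul,
      mul_assoc]
  rw [norm_smul, h_inner]
  gcongr
  exact norm_sum_Ioc_e_mul_mul_le_den hr (mem_Ioc.1 hm).1 (by omega) 0 _

lemma sum_truncGT_mul_truncGT_mul_smul_e_eq (α : ℝ) (f g h : ArithmeticFunction ℝ) (U x : ℕ) :
    ∑ n ∈ Ioc 0 x, (truncGT U f * (truncGT U g * h)) n • e (α * n) =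
      ∑ m ∈ Ioc U x, ∑ n ∈ Ioc U (x / m),
        (truncGT U f m : ℂ) * ((truncGT U g * h) n : ℂ) * e (α * (m * n)) := by
  have h_sub : ∀ B, Ioc U B ⊆ Ioc 0 B := fun B => Ioc_subset_Ioc_left U.zero_le
  rw [sum_Ioc_mul_smul, ← sum_subset (h_sub x) fun m _ hm => by
    rw [truncGT_of_le f (by grind), zero_smul]]
  refine sum_congr rfl fun m _ => ?_
  rw [← sum_subset (h_sub (x / m)) fun n _ hn => by
    rw [truncGT_mul_of_le g h (by grind), zero_smul], smul_sum]
  refine sum_congr rfl fun n _ => ?_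
  rw [Complex.real_smul, Complex.real_smul, mul_assoc]
  push_cast
  rfl

lemma norm_sum_truncGT_moebius_mul_smul_e_le (hr : |α - r| ≤ 1 / (r.den : ℝ) ^ 2) {U x : ℕ}
    (hU : 0 < U) (hUr : U ≤ r.den) {ℓ : ℝ} (hℓx : 1 + Real.log x ≤ ℓ)
    (hℓr : 1 + Real.log r.den ≤ ℓ) :
    ‖∑ n ∈ Ioc 0 x, (truncGT U (μ : ArithmeticFunction ℝ) *
        (truncGT U Λ * (ζ : ArithmeticFunction ℝ))) n • e (α * n)‖ ≤
      ℓ ^ 3 * (6 * x / √U + 3 * √(r.den * x)) := by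
  have hℓ1 : 1 ≤ ℓ := by linarith [Real.log_natCast_nonneg x]
  have hy : ∀ n ∈ Ioc U x, ‖((truncGT U Λ * (ζ : ArithmeticFunction ℝ)) n : ℂ)‖ ≤ ℓ := by
    intro n hn
    rw [Complex.norm_real, mul_comm (truncGT U Λ)]
    have h_le_log := norm_mul_apply_le_log norm_coe_zeta_le_one
      (fun k => (norm_truncGT_le U Λ k).trans_eq (norm_vonMangoldt k)) n
    have h_log_mono : Real.log n ≤ Real.log x := monotone_log_natCast (mem_Ioc.1 hn).2
    linarith
  rw [sum_truncGT_mul_truncGT_mul_smul_e_eq]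
  refine le_of_sq_le_sq ((norm_sum_sum_mul_e_sq_le hr hU hUr hℓx hℓr (fun m => ?_) hy).trans ?_)
    (by positivity)
  · rw [Complex.norm_real]
    exact (norm_truncGT_le U _ m).trans (norm_coe_moebius_le_one m)
  · have h_sq : 28 * (x : ℝ) ^ 2 / U + 8 * r.den * x ≤ (6 * x / √U + 3 * √(r.den * x)) ^ 2 := by
      have h_cross : 0 ≤ 2 * (6 * x / √U) * (3 * √(r.den * x)) := by positivity
      have h_div : 0 ≤ (x : ℝ) ^ 2 / U := by positivity
      have h_mul : 0 ≤ (r.den : ℝ) * x := by positivity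
      rw [add_sq, div_pow, mul_pow, mul_pow, Real.sq_sqrt (by positivity),
        Real.sq_sqrt (by positivity), mul_div_assoc, mul_div_assoc]
      linarith
    calc _ = ℓ ^ 5 * (28 * (x : ℝ) ^ 2 / U + 8 * r.den * x) := by ring
      _ ≤ ℓ ^ 6 * (6 * x / √U + 3 * √(r.den * x)) ^ 2 := by gcongr; norm_num
      _ = _ := by ring

lemma norm_sum_vonMangoldt_smul_e_le (hr : |α - r| ≤ 1 / (r.den : ℝ) ^ 2) {U x : ℕ} (hU : 0 < U)
    (hUr : 2 * U ^ 2 ≤ r.den) {ℓ : ℝ} (hℓx : 1 + Real.log x ≤ ℓ) (hℓr : 1 + Real.log r.den ≤ ℓ) :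
    ‖∑ n ∈ Ioc 0 x, Λ n • e (α * n)‖ ≤
      ℓ ^ 3 * (4 * U ^ 2 * r.den + 6 * x / √U + 3 * √(r.den * x)) := by
  have hU_sq : U ≤ U ^ 2 := Nat.le_self_pow two_ne_zero U
  have h_log : 0 ≤ Real.log x := Real.log_natCast_nonneg x
  have hℓ1 : 1 ≤ ℓ := by linarith
  have h_typeI : U * Real.log x + U * (r.den * (2 * Real.log x)) +
      (U ^ 2 : ℕ) * (Real.log x * r.den) ≤ ℓ ^ 3 * (4 * U ^ 2 * r.den) := by
    have hq : (1 : ℝ) ≤ r.den := by exact_mod_cast r.den_pos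
    have hU1 : (U : ℝ) * r.den ≤ U ^ 2 * r.den := by gcongr; exact_mod_cast hU_sq
    have hU2 : (U : ℝ) ≤ U * r.den := le_mul_of_one_le_right U.cast_nonneg hq
    have h_log_le : Real.log x ≤ ℓ ^ 3 := by linarith [le_self_pow₀ hℓ1 three_ne_zero]
    calc _ = Real.log x * (U + 2 * (U * r.den) + U ^ 2 * r.den) := by push_cast; ring
      _ ≤ ℓ ^ 3 * (4 * U ^ 2 * r.den) := by gcongr; linarith
  have h_vaughan : ∀ n, Λ n = truncLE U Λ n +
      (truncLE U (μ : ArithmeticFunction ℝ) * ArithmeticFunction.log) n -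
      (truncLE U (μ : ArithmeticFunction ℝ) * truncLE U Λ * (ζ : ArithmeticFunction ℝ)) n +
      (truncGT U (μ : ArithmeticFunction ℝ) * (truncGT U Λ * (ζ : ArithmeticFunction ℝ))) n := by
    intro n
    conv_lhs => rw [vonMangoldt_eq_vaughan U]
    simp [sub_eq_add_neg]
  simp_rw [h_vaughan, add_smul, sub_smul, add_smul, sum_add_distrib, sum_sub_distrib,
    sum_add_distrib]
  calc _ ≤ U * Real.log x + U * (r.den * (2 * Real.log x)) + (U ^ 2 : ℕ) * (Real.log x * r.den)
          + ℓ ^ 3 * (6 * x / √U + 3 * √(r.den * x)) := by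
        refine norm_add_le_of_le (norm_sub_le_of_le (norm_add_le_of_le ?_ ?_) ?_) ?_
        · exact norm_sum_truncLE_vonMangoldt_smul_e_le α U x
        · exact norm_sum_truncLE_moebius_mul_log_smul_e_le hr (by omega) x
        · exact norm_sum_truncLE_mul_truncLE_mul_zeta_smul_e_le hr hUr x
        · exact norm_sum_truncGT_moebius_mul_smul_e_le hr hU (by omega) hℓx hℓr
    _ ≤ _ := by linarith

end VonMangoldtSum

/-! ### The exponential sum over primes -/

section PrimeSum

open Filter

lemma primesUpTo_eq_filter_Ioc (N : ℕ) : primesUpTo N = {p ∈ Ioc 0 N | p.Prime} := by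
  ext p
  simp only [primesUpTo, mem_filter, mem_range, mem_Ioc, Nat.lt_succ_iff]
  exact ⟨fun h => ⟨⟨h.2.pos, h.1⟩, h.2⟩, fun h => ⟨h.1.2, h.2⟩⟩

lemma le_of_mem_primesUpTo {N p : ℕ} (hp : p ∈ primesUpTo N) : p ≤ N := by
  rw [primesUpTo_eq_filter_Ioc] at hp
  exact (mem_Ioc.1 (mem_filter.1 hp).1).2

lemma card_primesUpTo_le (N : ℕ) : #(primesUpTo N) ≤ N := by
  simpa [primesUpTo_eq_filter_Ioc] using card_filter_le (Ioc 0 N) Nat.Prime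

/-- The exponential sum `S(α) = ∑_{p ≤ N} e(αp)` over primes of the circle method. -/
noncomputable def primeExpSum (N : ℕ) (α : ℝ) : ℂ := ∑ p ∈ primesUpTo N, e (α * p)

/-- The integer `⌈1 + log N⌉`; the parameters of the circle method are powers of it. -/
noncomputable def logCeil (N : ℕ) : ℕ := ⌈1 + Real.log N⌉₊

lemma one_add_log_le_logCeil (N : ℕ) : 1 + Real.log N ≤ logCeil N := Nat.le_ceil _

lemma one_le_logCeil (N : ℕ) : 1 ≤ logCeil N := by
  have h := one_add_log_le_logCeil N
  have h_log := Real.log_natCast_nonneg N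
  exact_mod_cast (by linarith : (1 : ℝ) ≤ logCeil N)

lemma logCeil_le (N : ℕ) : (logCeil N : ℝ) ≤ 2 + Real.log N := by
  have h := Nat.ceil_lt_add_one (add_nonneg zero_le_one (Real.log_natCast_nonneg N))
  simp only [logCeil]
  linarith

lemma eventually_mul_logCeil_pow_lt (K : ℝ) (E : ℕ) :
    ∀ᶠ N : ℕ in atTop, K * (logCeil N : ℝ) ^ E < N := by
  have h_bigO : (fun N => (logCeil N : ℝ)) =O[atTop] fun N : ℕ => Real.log N := by
    refine Asymptotics.IsBigO.of_bound 3 ?_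
    filter_upwards [(Real.tendsto_log_atTop.comp tendsto_natCast_atTop_atTop).eventually_ge_atTop 1]
      with N (hN : 1 ≤ Real.log N)
    rw [Real.norm_of_nonneg (logCeil N).cast_nonneg, Real.norm_of_nonneg (zero_le_one.trans hN)]
    linarith [logCeil_le N]
  have h_littleO := ((h_bigO.pow E).trans_isLittleO (Real.isLittleO_pow_log_id_atTop.comp_tendsto
    tendsto_natCast_atTop_atTop)).const_mul_left K
  filter_upwards [h_littleO.def one_half_pos, eventually_gt_atTop 0] with N hN hN0
  have hN0' : (0 : ℝ) < N := by exact_mod_cast hN0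
  have h_norm : ‖(id ∘ Nat.cast : ℕ → ℝ) N‖ = N := Real.norm_of_nonneg hN0'.le
  rw [h_norm] at hN
  linarith [(Real.le_norm_self _).trans hN]

lemma norm_sum_vonMangoldt_sub_sum_log_le (α : ℝ) (x : ℕ) :
    ‖∑ n ∈ Ioc 0 x, ArithmeticFunction.vonMangoldt n • e (α * n) -
        ∑ p ∈ primesUpTo x, Real.log p • e (α * p)‖ ≤ 2 * √x * Real.log x := by
  rcases x.eq_zero_or_pos with rfl | hx
  · simp [primesUpTo_eq_filter_Ioc]
  have h_primes : ∑ p ∈ primesUpTo x, Real.log p • e (α * p) =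
      ∑ n ∈ Ioc 0 x with n.Prime, ArithmeticFunction.vonMangoldt n • e (α * n) := by
    rw [primesUpTo_eq_filter_Ioc]
    refine sum_congr rfl fun p hp => ?_
    rw [ArithmeticFunction.vonMangoldt_apply_prime (mem_filter.1 hp).2]
  rw [h_primes, ← sum_filter_add_sum_filter_not (Ioc 0 x) Nat.Prime, add_sub_cancel_left]
  calc _ ≤ ∑ n ∈ Ioc 0 x with ¬n.Prime, ArithmeticFunction.vonMangoldt n :=
        norm_sum_le_of_le _ fun n _ => by rw [norm_smul, norm_e, mul_one, norm_vonMangoldt]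
    _ = Chebyshev.psi x - Chebyshev.theta x := by
        rw [Chebyshev.psi_sub_theta_eq_sum_not_prime, Nat.floor_natCast]
    _ ≤ _ := Chebyshev.psi_sub_theta_le (by exact_mod_cast hx)

variable {α : ℝ} {r : ℚ}

lemma norm_sum_primesUpTo_log_smul_e_le (hr : |α - r| ≤ 1 / (r.den : ℝ) ^ 2) {U x : ℕ}
    (hU : 0 < U) (hUr : 2 * U ^ 2 ≤ r.den) {ℓ : ℝ} (hℓx : 1 + Real.log x ≤ ℓ)
    (hℓr : 1 + Real.log r.den ≤ ℓ) :
    ‖∑ p ∈ primesUpTo x, Real.log p • e (α * p)‖ ≤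
      ℓ ^ 3 * (4 * U ^ 2 * r.den + 6 * x / √U + 5 * √(r.den * x)) := by
  have hℓ1 : 1 ≤ ℓ := by linarith [Real.log_natCast_nonneg x]
  have h_log : Real.log x ≤ ℓ ^ 3 := by linarith [le_self_pow₀ hℓ1 three_ne_zero]
  have h_sqrt : √(x : ℝ) ≤ √(r.den * x) := by
    gcongr
    exact le_mul_of_one_le_left x.cast_nonneg (by exact_mod_cast r.den_pos)
  have h_error : 2 * √(x : ℝ) * Real.log x ≤ 2 * √(r.den * x) * ℓ ^ 3 := by gcongr
  have h_diff := norm_sum_vonMangoldt_sub_sum_log_le α x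
  linarith [norm_le_norm_add_norm_sub
    (∑ n ∈ Ioc 0 x, ArithmeticFunction.vonMangoldt n • e (α * n))
    (∑ p ∈ primesUpTo x, Real.log p • e (α * p)),
    norm_sum_vonMangoldt_smul_e_le hr hU hUr hℓx hℓr]

lemma primeExpSum_eq_sum_one_div_log_smul (N : ℕ) (α : ℝ) :
    primeExpSum N α = ∑ n ∈ Ioc 0 N, (1 / Real.log (max n 2 : ℕ)) •
      if n.Prime then Real.log n • e (α * n) else 0 := by
  rw [primeExpSum, primesUpTo_eq_filter_Ioc, sum_filter]
  refine sum_congr rfl fun n _ => ?_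
  split_ifs with hp
  · have h_log : Real.log n ≠ 0 := (Real.log_pos (by exact_mod_cast hp.one_lt)).ne'
    rw [max_eq_left hp.two_le, smul_smul, one_div_mul_cancel h_log, one_smul]
  · rw [smul_zero]

lemma norm_primeExpSum_le_of_abs_sub_le (hr : |α - r| ≤ 1 / (r.den : ℝ) ^ 2) {U N : ℕ}
    (hU : 0 < U) (hUr : 2 * U ^ 2 ≤ r.den) {ℓ : ℝ} (hℓx : 1 + Real.log N ≤ ℓ)
    (hℓr : 1 + Real.log r.den ≤ ℓ) :
    ‖primeExpSum N α‖ ≤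
      2 * (ℓ ^ 3 * (4 * U ^ 2 * r.den + 6 * N / √U + 5 * √(r.den * N))) := by
  have hℓ1 : 1 ≤ ℓ := by linarith [Real.log_natCast_nonneg N]
  have h_log_max : ∀ n : ℕ, Real.log 2 ≤ Real.log (max n 2 : ℕ) := fun n => by
    exact_mod_cast monotone_log_natCast (le_max_right n 2)
  have h_log_two : 1 / 2 < Real.log 2 := by linarith [Real.log_two_gt_d9]
  rw [primeExpSum_eq_sum_one_div_log_smul, mul_comm]
  refine (norm_sum_Ioc_smul_le_of_antitone (w := fun n => 1 / Real.log (max n 2 : ℕ))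
    (G := ℓ ^ 3 * (4 * U ^ 2 * r.den + 6 * N / √U + 5 * √(r.den * N)))
    (fun i j hij => ?_) (fun n => ?_) N.zero_le fun j _ hj => ?_).trans ?_
  · exact one_div_le_one_div_of_le (by linarith [h_log_max i])
      (monotone_log_natCast (max_le_max_right 2 hij))
  · exact one_div_nonneg.2 (by linarith [h_log_max n])
  · rw [← sum_filter, ← primesUpTo_eq_filter_Ioc]
    have h_log : Real.log j ≤ Real.log N := monotone_log_natCast hj
    refine (norm_sum_primesUpTo_log_smul_e_le hr hU hUr (by linarith) hℓr).trans ?_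
    gcongr
  · gcongr
    rw [div_le_iff₀ (by linarith [h_log_max 0])]
    linarith [h_log_max 0]

lemma norm_primeExpSum_le_of_pow_le_den (hr : |α - r| ≤ 1 / (r.den : ℝ) ^ 2) {N P : ℕ}
    (hP : 0 < P) (hPr : 2 * P ^ 4 ≤ r.den) (hPN : r.den * P ^ 5 ≤ N) {ℓ : ℝ}
    (hℓ : 1 + Real.log N ≤ ℓ) : ‖primeExpSum N α‖ ≤ 30 * ℓ ^ 3 * (N / P) := by
  have hP1 : (1 : ℝ) ≤ P := by exact_mod_cast hP
  have hN : (r.den : ℝ) * P ^ 5 ≤ N := by exact_mod_cast hPN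
  have h_den_le : r.den ≤ N := (Nat.le_mul_of_pos_right _ (by positivity)).trans hPN
  have h_log : Real.log r.den ≤ Real.log N := monotone_log_natCast h_den_le
  have hℓ1 : 1 ≤ ℓ := by linarith [Real.log_natCast_nonneg N]
  have h_typeI : ((P : ℝ) ^ 2) ^ 2 * r.den ≤ N / P := by
    rw [le_div_iff₀ (by positivity)]
    linarith
  have h_sqrt : √(r.den * N : ℝ) ≤ N / P := by
    refine Real.sqrt_le_iff.2 ⟨by positivity, ?_⟩
    have h_sq : (r.den : ℝ) * P ^ 2 ≤ N := le_trans (by gcongr; norm_num) hN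
    rw [div_pow, le_div_iff₀ (by positivity)]
    nlinarith [N.cast_nonneg (α := ℝ)]
  refine (norm_primeExpSum_le_of_abs_sub_le hr (U := P ^ 2) (by positivity)
    (by rw [← pow_mul]; exact hPr) hℓ (by linarith)).trans ?_
  rw [Nat.cast_pow, Real.sqrt_sq (by positivity), mul_assoc 4, mul_div_assoc]
  calc _ ≤ 2 * (ℓ ^ 3 * (4 * (N / P) + 6 * (N / P) + 5 * (N / P))) := by gcongr
    _ = _ := by ring

lemma exists_rat_abs_sub_le_of_lt_norm_primeExpSum {A N : ℕ}
    (hN : logCeil N ^ (5 * (A + 3)) ≤ N) (hα : 30 * N / (logCeil N : ℝ) ^ A < ‖primeExpSum N α‖) :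
    ∃ q : ℚ, q.den ≤ 2 * logCeil N ^ (4 * (A + 3)) ∧
      |α - q| ≤ (logCeil N : ℝ) ^ (5 * (A + 3)) / N := by
  have hL : 0 < logCeil N := one_le_logCeil N
  set P := logCeil N ^ (A + 3) with hP
  have hP_pow : ∀ k, logCeil N ^ (k * (A + 3)) = P ^ k := fun k => by rw [hP, mul_comm, pow_mul]
  have hP0 : 0 < P := by positivity
  simp only [← Nat.cast_pow, hP_pow] at hN ⊢
  obtain ⟨q, hq, hqM⟩ := Real.exists_rat_abs_sub_le_and_den_le α (Nat.div_pos hN (by positivity))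
  have h_den : (1 : ℝ) ≤ q.den := by exact_mod_cast q.den_pos
  have hM : (N : ℝ) ≤ ((N / P ^ 5 : ℕ) + 1) * (P ^ 5 : ℕ) := by
    exact_mod_cast (Nat.lt_mul_div_succ N (by positivity : 0 < P ^ 5)).le.trans_eq (mul_comm _ _)
  refine ⟨q, ?_, hq.trans ?_⟩
  · by_contra! h_large
    have hq_sq : |α - q| ≤ 1 / (q.den : ℝ) ^ 2 := by
      have hqM' : (q.den : ℝ) ≤ (N / P ^ 5 : ℕ) := by exact_mod_cast hqM
      refine hq.trans (one_div_le_one_div_of_le (by positivity) ?_)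
      nlinarith
    refine hα.not_ge ((norm_primeExpSum_le_of_pow_le_den hq_sq hP0 h_large.le
      ((Nat.mul_le_mul_right _ hqM).trans (Nat.div_mul_le_self _ _))
      (one_add_log_le_logCeil N)).trans_eq ?_)
    rw [hP, Nat.cast_pow, pow_add]
    field_simp
  · have hN0 : (0 : ℝ) < N := by exact_mod_cast (by positivity : 0 < P ^ 5).trans_le hN
    rw [div_le_div_iff₀ (by positivity) hN0, one_mul]
    nlinarith [mul_le_mul_of_nonneg_left h_den
      (by positivity : 0 ≤ (((N / P ^ 5 : ℕ) : ℝ) + 1) * (P ^ 5 : ℕ))]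

end PrimeSum

/-! ### Twisted counts of ternary representations -/

section Twisted

open Filter
open scoped ComplexConjugate

lemma exists_one_le_pow_mul_abs_sub_ratCast {η : ℝ} (hη : Irrational η) (hη' : ¬Liouville η) :
    ∃ n : ℕ, ∀ q : ℚ, 1 ≤ (2 * q.den : ℝ) ^ n * |η - q| := by
  simp only [Liouville, not_forall, not_exists, not_and, not_lt] at hη'
  obtain ⟨n, hn⟩ := hη'
  refine ⟨n, fun q => ?_⟩
  have h_eq : (((2 * q.num : ℤ) : ℝ) / ((2 * q.den : ℤ) : ℝ)) = q := by
    push_cast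
    rw [mul_div_mul_left _ _ two_ne_zero, ← Rat.cast_def]
  have h_approx := hn (2 * q.num) (2 * q.den) (by have := q.den_pos; omega)
  rw [h_eq] at h_approx
  have h_approx := h_approx (hη.ne_rat q)
  push_cast at h_approx
  rwa [div_le_iff₀' (by have := q.den_pos; positivity)] at h_approx

lemma den_sub_div_intCast_le (q₁ q₂ : ℚ) {k : ℤ} (hk : k ≠ 0) :
    ((q₂ - q₁) / k).den ≤ q₂.den * q₁.den * k.natAbs := by
  have h_inv : (k : ℚ)⁻¹.den = k.natAbs := by rw [Rat.inv_intCast_den, if_neg hk]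
  rw [div_eq_mul_inv]
  refine Nat.le_of_dvd (by have := q₁.den_pos; have := q₂.den_pos; positivity) ?_
  exact (Rat.mul_den_dvd _ _).trans (h_inv ▸ Nat.mul_dvd_mul_right (Rat.sub_den_dvd _ _) _)

lemma exists_rat_abs_sub_le_of_lt_norm_primeExpSum_add {A N : ℕ} {α η : ℝ} {k : ℤ} (hk : k ≠ 0)
    (hN : logCeil N ^ (5 * (A + 3)) ≤ N) (hα : 30 * N / (logCeil N : ℝ) ^ A < ‖primeExpSum N α‖)
    (hαk : 30 * N / (logCeil N : ℝ) ^ A < ‖primeExpSum N (α + k * η)‖) :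
    ∃ q : ℚ, q.den ≤ 4 * logCeil N ^ (8 * (A + 3)) * k.natAbs ∧
      |η - q| ≤ 2 * (logCeil N : ℝ) ^ (5 * (A + 3)) / N := by
  obtain ⟨q₁, hd₁, hq₁⟩ := exists_rat_abs_sub_le_of_lt_norm_primeExpSum hN hα
  obtain ⟨q₂, hd₂, hq₂⟩ := exists_rat_abs_sub_le_of_lt_norm_primeExpSum hN hαk
  have hk0 : (k : ℝ) ≠ 0 := by exact_mod_cast hk
  have hk1 : 1 ≤ |(k : ℝ)| := by exact_mod_cast Int.one_le_abs hk
  refine ⟨(q₂ - q₁) / k, (den_sub_div_intCast_le q₁ q₂ hk).trans ?_, ?_⟩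
  · calc _ ≤ 2 * logCeil N ^ (4 * (A + 3)) * (2 * logCeil N ^ (4 * (A + 3))) * k.natAbs := by gcongr
      _ = _ := by ring
  · have h_eq : η - (((q₂ - q₁) / k : ℚ) : ℝ) = ((α + k * η - q₂) - (α - q₁)) / k := by
      push_cast
      field_simp
      ring
    rw [h_eq, abs_div]
    refine (div_le_self (abs_nonneg _) hk1).trans ((abs_sub _ _).trans ?_)
    rw [mul_div_assoc, two_mul]
    exact add_le_add hq₂ hq₁

/-- Large values of `S` at both `α` and `α + kη` would yield a rational approximation of `η` that
is too good for a number which is not Liouville. -/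
lemma eventually_norm_primeExpSum_le_or {η : ℝ} (hη : Irrational η) (hη' : ¬Liouville η)
    (A B : ℕ) :
    ∀ᶠ N : ℕ in atTop, ∀ (α : ℝ) (k : ℤ), k ≠ 0 → k.natAbs ≤ 2 * logCeil N ^ B →
      ‖primeExpSum N α‖ ≤ 30 * N / (logCeil N : ℝ) ^ A ∨
        ‖primeExpSum N (α + k * η)‖ ≤ 30 * N / (logCeil N : ℝ) ^ A := by
  obtain ⟨n, hn⟩ := exists_one_le_pow_mul_abs_sub_ratCast hη hη'
  filter_upwards [eventually_mul_logCeil_pow_lt 1 (5 * (A + 3)),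
    eventually_mul_logCeil_pow_lt (2 * 16 ^ n) (n * (8 * (A + 3) + B) + 5 * (A + 3))]
    with N hN hN_large α k hk hkB
  rw [one_mul] at hN
  by_contra! h_large
  have hN0 : (0 : ℝ) < N := lt_of_le_of_lt (by positivity) hN
  obtain ⟨q, h_den, hq⟩ := exists_rat_abs_sub_le_of_lt_norm_primeExpSum_add hk
    (by exact_mod_cast hN.le) h_large.1 h_large.2
  have h_den' : (2 * q.den : ℝ) ≤ 16 * (logCeil N : ℝ) ^ (8 * (A + 3) + B) := by
    have h := h_den.trans (Nat.mul_le_mul_left _ hkB)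
    rw [pow_add]
    exact_mod_cast (by linarith :
      2 * q.den ≤ 16 * (logCeil N ^ (8 * (A + 3)) * logCeil N ^ B))
  refine hN_large.not_ge ?_
  calc (N : ℝ) ≤ (2 * q.den : ℝ) ^ n * |η - q| * N := le_mul_of_one_le_left hN0.le (hn q)
    _ ≤ (16 * (logCeil N : ℝ) ^ (8 * (A + 3) + B)) ^ n *
        (2 * (logCeil N : ℝ) ^ (5 * (A + 3)) / N) * N := by gcongr
    _ = 2 * 16 ^ n * (logCeil N : ℝ) ^ (n * (8 * (A + 3) + B) + 5 * (A + 3)) := by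
      rw [mul_assoc, div_mul_cancel₀ _ hN0.ne', mul_pow, ← pow_mul, pow_add, mul_comm n]
      ring

lemma e_eq_one_iff {x : ℝ} : e x = 1 ↔ ∃ n : ℤ, x = n := by
  rw [e_eq_exp, Complex.exp_eq_one_iff]
  refine exists_congr fun n => ?_
  rw [mul_comm, mul_left_inj' Complex.two_pi_I_ne_zero]
  norm_cast

lemma sum_range_e_div_mul {R : ℕ} (hR : 0 < R) (h : ℤ) :
    ∑ j ∈ range R, e (j / R * h) = if (R : ℤ) ∣ h then (R : ℂ) else 0 := by
  have hR0 : (R : ℝ) ≠ 0 := by positivity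
  have h_pow : ∀ j : ℕ, e (j / R * h) = e (h / R) ^ j := fun j => by
    rw [← e_mul_natCast]
    ring_nf
  have h_one : e (h / R) = 1 ↔ (R : ℤ) ∣ h := by
    rw [e_eq_one_iff]
    refine exists_congr fun n => ?_
    rw [div_eq_iff hR0, mul_comm]
    norm_cast
  simp only [h_pow]
  split_ifs with h_dvd
  · simp [h_one.2 h_dvd]
  · rw [geom_sum_eq (mt h_one.1 h_dvd), ← e_mul_natCast, div_mul_cancel₀ _ hR0, e_intCast, sub_self,
      zero_div]

lemma sum_range_e_div_mul_of_abs_lt {R : ℕ} {h : ℤ} (hR : |h| < R) :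
    ∑ j ∈ range R, e (j / R * h) = if h = 0 then (R : ℂ) else 0 := by
  rw [sum_range_e_div_mul (by have := abs_nonneg h; omega)]
  exact if_congr ⟨fun h_dvd => Int.eq_zero_of_abs_lt_dvd h_dvd hR, fun h => h ▸ dvd_zero _⟩ rfl rfl

lemma sum_range_norm_sq_sum_mul_e {R : ℕ} {s : Finset ℕ} (hs : ∀ n ∈ s, n < R) (c : ℕ → ℂ) :
    ∑ j ∈ range R, ‖∑ n ∈ s, c n * e (j / R * n)‖ ^ 2 = R * ∑ n ∈ s, ‖c n‖ ^ 2 := by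
  have h_expand : ∀ j : ℕ, ((‖∑ n ∈ s, c n * e (j / R * n)‖ ^ 2 : ℝ) : ℂ) =
      ∑ m ∈ s, ∑ n ∈ s, c m * conj (c n) * e (j / R * ((m - n : ℤ) : ℝ)) := fun j => by
    rw [Complex.ofReal_pow, ← Complex.mul_conj', map_sum, sum_mul_sum]
    refine sum_congr rfl fun m _ => sum_congr rfl fun n _ => ?_
    rw [map_mul, conj_e, mul_mul_mul_comm, ← e_add]
    push_cast
    ring_nf
  have h_diag : ∀ m ∈ s, ∑ n ∈ s, ∑ j ∈ range R, c m * conj (c n) * e (j / R * ((m - n : ℤ) : ℝ)) =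
      ((R * ‖c m‖ ^ 2 : ℝ) : ℂ) := fun m hm => by
    rw [sum_eq_single_of_mem m hm fun n hn hnm => ?_]
    · simp [e_zero, Complex.mul_conj', mul_comm]
    · have hm' := hs m hm
      have hn' := hs n hn
      rw [← mul_sum, sum_range_e_div_mul_of_abs_lt (by rw [abs_lt]; omega), if_neg (by omega),
        mul_zero]
  have h_complex : ((∑ j ∈ range R, ‖∑ n ∈ s, c n * e (j / R * n)‖ ^ 2 : ℝ) : ℂ) =
      ((R * ∑ n ∈ s, ‖c n‖ ^ 2 : ℝ) : ℂ) := by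
    rw [Complex.ofReal_sum, sum_congr rfl fun j _ => h_expand j, sum_comm, mul_sum,
      Complex.ofReal_sum]
    refine sum_congr rfl fun m hm => ?_
    rw [sum_comm, h_diag m hm]
  exact_mod_cast h_complex

lemma sum_range_norm_primeExpSum_sq {N R : ℕ} (hR : N < R) (β : ℝ) :
    ∑ j ∈ range R, ‖primeExpSum N (j / R + β)‖ ^ 2 = R * #(primesUpTo N) := by
  have h_split : ∀ j : ℕ, primeExpSum N (j / R + β) =
      ∑ p ∈ primesUpTo N, e (β * p) * e (j / R * p) := fun j =>
    sum_congr rfl fun p _ => by rw [← e_add]; ring_nf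
  simp only [h_split]
  rw [sum_range_norm_sq_sum_mul_e fun p hp => (le_of_mem_primesUpTo hp).trans_lt hR]
  simp [norm_e]

/-- The triples of primes with sum `N`. -/
def ternaryReps (N : ℕ) : Finset (ℕ × ℕ × ℕ) :=
  {t ∈ primesUpTo N ×ˢ primesUpTo N ×ˢ primesUpTo N | t.1 + t.2.1 + t.2.2 = N}

lemma mem_ternaryReps {N : ℕ} {t : ℕ × ℕ × ℕ} : t ∈ ternaryReps N ↔
    (t.1 ∈ primesUpTo N ∧ t.2.1 ∈ primesUpTo N ∧ t.2.2 ∈ primesUpTo N) ∧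
      t.1 + t.2.1 + t.2.2 = N := by
  simp only [ternaryReps, mem_filter, mem_product]

lemma card_ternaryReps_le (N : ℕ) : #(ternaryReps N) ≤ N ^ 2 := by
  calc #(ternaryReps N) ≤ #(primesUpTo N ×ˢ primesUpTo N) := by
        refine card_le_card_of_injOn (fun t => (t.1, t.2.1)) (fun t ht => ?_) ?_
        · have ht' := (mem_ternaryReps.1 ht).1
          exact mem_coe.2 (mem_product.2 ⟨ht'.1, ht'.2.1⟩)
        · rintro ⟨a, b, c⟩ ht ⟨a', b', c'⟩ ht' h_eq
          have h_sum := (mem_ternaryReps.1 ht).2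
          have h_sum' := (mem_ternaryReps.1 ht').2
          simp only [Prod.mk.injEq] at h_eq h_sum h_sum' ⊢
          omega
    _ ≤ N ^ 2 := by
        rw [card_product, sq]
        exact Nat.mul_le_mul (card_primesUpTo_le N) (card_primesUpTo_le N)

/-- The ternary representations of `N` counted with the twist `e(β₁p₁ + β₂p₂ + β₃p₃)`; the Fourier
expansion of a weight `w(ηp₁)w(ηp₂)w(ηp₃)` reduces to these. -/
noncomputable def twistedCount (N : ℕ) (β₁ β₂ β₃ : ℝ) : ℂ :=
  ∑ t ∈ ternaryReps N, e (β₁ * t.1) * e (β₂ * t.2.1) * e (β₃ * t.2.2)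

lemma twistedCount_self (N : ℕ) (β : ℝ) :
    twistedCount N β β β = #(ternaryReps N) * e (β * N) := by
  rw [twistedCount, ← nsmul_eq_mul]
  refine sum_eq_card_nsmul fun t ht => ?_
  rw [← (mem_ternaryReps.1 ht).2, ← e_add, ← e_add]
  push_cast
  ring_nf

lemma natCast_mul_twistedCount {N R : ℕ} (hR : 2 * N < R) (β₁ β₂ β₃ : ℝ) :
    R * twistedCount N β₁ β₂ β₃ = ∑ j ∈ range R,
      primeExpSum N (j / R + β₁) * primeExpSum N (j / R + β₂) * primeExpSum N (j / R + β₃) *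
        e (-(j / R * N)) := by
  have h_expand : ∀ j : ℕ,
      primeExpSum N (j / R + β₁) * primeExpSum N (j / R + β₂) * primeExpSum N (j / R + β₃) *
        e (-(j / R * N)) =
      ∑ t ∈ primesUpTo N ×ˢ primesUpTo N ×ˢ primesUpTo N,
        e (β₁ * t.1) * e (β₂ * t.2.1) * e (β₃ * t.2.2) *
          e (j / R * ((t.1 + t.2.1 + t.2.2 - N : ℤ) : ℝ)) := fun j => by
    simp only [primeExpSum, sum_product]
    rw [sum_mul_sum, sum_mul, sum_mul]
    refine sum_congr rfl fun p _ => ?_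
    rw [sum_mul, sum_mul]
    refine sum_congr rfl fun q _ => ?_
    rw [mul_sum, sum_mul]
    refine sum_congr rfl fun r _ => ?_
    simp only [← e_add]
    push_cast
    ring_nf
  simp only [h_expand]
  rw [sum_comm, twistedCount, ternaryReps, mul_sum, sum_filter]
  refine sum_congr rfl fun t ht => ?_
  simp only [mem_product] at ht
  have h₁ := le_of_mem_primesUpTo ht.1
  have h₂ := le_of_mem_primesUpTo ht.2.1
  have h₃ := le_of_mem_primesUpTo ht.2.2
  rw [← mul_sum, sum_range_e_div_mul_of_abs_lt (by rw [abs_lt]; omega), mul_ite, mul_zero,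
    mul_comm (R : ℂ)]
  exact if_congr (by omega) rfl rfl

lemma mul_mul_le_mul_sum_sq_of_le {x y z δ : ℝ} (hx : 0 ≤ x) (hy : 0 ≤ y) (hz : 0 ≤ z)
    (hδ : x ≤ δ ∨ y ≤ δ ∨ z ≤ δ) : x * y * z ≤ δ * (x ^ 2 + y ^ 2 + z ^ 2) := by
  have h_min : ∀ u v w : ℝ, 0 ≤ u → 0 ≤ v → 0 ≤ w → u ≤ δ →
      u * (v * w) ≤ δ * (u ^ 2 + v ^ 2 + w ^ 2) := fun u v w hu hv hw hu_le =>
    mul_le_mul hu_le (by nlinarith [sq_nonneg (v - w), sq_nonneg u]) (by positivity)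
      (hu.trans hu_le)
  rcases hδ with h | h | h
  · linarith [h_min x y z hx hy hz h]
  · linarith [h_min y x z hy hx hz h]
  · linarith [h_min z x y hz hx hy h]

lemma norm_twistedCount_le {N : ℕ} {β₁ β₂ β₃ δ : ℝ}
    (h : ∀ α, ‖primeExpSum N (α + β₁)‖ ≤ δ ∨ ‖primeExpSum N (α + β₂)‖ ≤ δ ∨
      ‖primeExpSum N (α + β₃)‖ ≤ δ) :
    ‖twistedCount N β₁ β₂ β₃‖ ≤ 3 * δ * N := by
  have hδ : 0 ≤ δ := by
    rcases h 0 with h | h | h <;> exact (norm_nonneg _).trans h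
  set R := 2 * N + 1
  have hR0 : (0 : ℝ) < R := by positivity
  have h_card : (#(primesUpTo N) : ℝ) ≤ N := by exact_mod_cast card_primesUpTo_le N
  refine le_of_mul_le_mul_left ?_ hR0
  calc (R : ℝ) * ‖twistedCount N β₁ β₂ β₃‖ = ‖(R : ℂ) * twistedCount N β₁ β₂ β₃‖ := by
        rw [norm_mul, Complex.norm_natCast]
    _ ≤ ∑ j ∈ range R, δ * (‖primeExpSum N (j / R + β₁)‖ ^ 2 +
          ‖primeExpSum N (j / R + β₂)‖ ^ 2 + ‖primeExpSum N (j / R + β₃)‖ ^ 2) := by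
        rw [natCast_mul_twistedCount (by omega)]
        refine norm_sum_le_of_le _ fun j _ => ?_
        rw [norm_mul, norm_mul, norm_mul, norm_e, mul_one]
        exact mul_mul_le_mul_sum_sq_of_le (norm_nonneg _) (norm_nonneg _) (norm_nonneg _) (h _)
    _ = R * (3 * δ * #(primesUpTo N)) := by
        rw [← mul_sum, sum_add_distrib, sum_add_distrib]
        simp only [sum_range_norm_primeExpSum_sq (show N < R by omega)]
        ring
    _ ≤ R * (3 * δ * N) := by gcongr

lemma eventually_norm_twistedCount_le {η : ℝ} (hη : Irrational η) (hη' : ¬Liouville η)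
    (A B : ℕ) :
    ∀ᶠ N : ℕ in atTop, ∀ m₁ m₂ m₃ : ℤ, ¬(m₁ = m₂ ∧ m₂ = m₃) → m₁.natAbs ≤ logCeil N ^ B →
      m₂.natAbs ≤ logCeil N ^ B → m₃.natAbs ≤ logCeil N ^ B →
      ‖twistedCount N (m₁ * η) (m₂ * η) (m₃ * η)‖ ≤ 90 * N ^ 2 / (logCeil N : ℝ) ^ A := by
  filter_upwards [eventually_norm_primeExpSum_le_or hη hη' A B] with N hN m₁ m₂ m₃ h_ne h₁ h₂ h₃
  have h_pair : ∀ (α : ℝ) (m m' : ℤ), m ≠ m' → m.natAbs ≤ logCeil N ^ B →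
      m'.natAbs ≤ logCeil N ^ B → ‖primeExpSum N (α + m * η)‖ ≤ 30 * N / (logCeil N : ℝ) ^ A ∨
        ‖primeExpSum N (α + m' * η)‖ ≤ 30 * N / (logCeil N : ℝ) ^ A := fun α m m' hm h h' => by
    have h_shift : α + m' * η = α + m * η + ((m' - m : ℤ) : ℝ) * η := by push_cast; ring
    rw [h_shift]
    exact hN _ _ (sub_ne_zero.2 hm.symm) (by omega)
  refine (norm_twistedCount_le fun α => ?_).trans_eq
    (show 3 * (30 * N / (logCeil N : ℝ) ^ A) * N = _ by ring)
  by_cases h₁₂ : m₁ = m₂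
  · exact Or.inr (h_pair α m₂ m₃ (fun h₂₃ => h_ne ⟨h₁₂, h₂₃⟩) h₂ h₃)
  · exact (h_pair α m₁ m₂ h₁₂ h₁ h₂).imp_right Or.inl

end Twisted

/-! ### Fourier series of trapezoids -/

section Trapezoid

open Real (sinc)

/-- The Fourier coefficients of the `1`-periodic extension of the indicator function of `(a, b)`. -/
noncomputable def intervalCoeff (a b : ℝ) (m : ℤ) : ℂ :=
  if m = 0 then ((b - a : ℝ) : ℂ) else
    (e (-(m * a)) - e (-(m * b))) / (2 * Real.pi * Complex.I * m)

@[simp]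
lemma intervalCoeff_zero (a b : ℝ) : intervalCoeff a b 0 = ((b - a : ℝ) : ℂ) := if_pos rfl

lemma two_pi_I_mul_mul_intervalCoeff (a b : ℝ) (m : ℤ) :
    2 * Real.pi * Complex.I * m * intervalCoeff a b m = e (-(m * a)) - e (-(m * b)) := by
  rcases eq_or_ne m 0 with rfl | hm
  · simp [e_zero]
  · have hm0 : (m : ℂ) ≠ 0 := by exact_mod_cast hm
    rw [intervalCoeff, if_neg hm, mul_div_cancel₀ _ (mul_ne_zero Complex.two_pi_I_ne_zero hm0)]

lemma two_pi_mul_abs_mul_norm_intervalCoeff (a b : ℝ) (m : ℤ) :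
    2 * Real.pi * |(m : ℝ)| * ‖intervalCoeff a b m‖ = ‖e (-(m * a)) - e (-(m * b))‖ := by
  rw [← two_pi_I_mul_mul_intervalCoeff]
  simp [abs_of_pos Real.pi_pos]

lemma pi_mul_abs_mul_norm_intervalCoeff_le (a b : ℝ) (m : ℤ) :
    Real.pi * |(m : ℝ)| * ‖intervalCoeff a b m‖ ≤ 1 := by
  have h := norm_sub_le (e (-(m * a))) (e (-(m * b)))
  rw [← two_pi_mul_abs_mul_norm_intervalCoeff, norm_e, norm_e] at h
  linarith

lemma norm_intervalCoeff_le {a b : ℝ} (hab : |b - a| ≤ 1) (m : ℤ) :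
    ‖intervalCoeff a b m‖ ≤ (max 1 |(m : ℝ)|)⁻¹ := by
  rcases eq_or_ne m 0 with rfl | hm
  · simpa [← Complex.ofReal_sub] using hab
  · have hm1 : 1 ≤ |(m : ℝ)| := by exact_mod_cast Int.one_le_abs hm
    rw [max_eq_right hm1, ← one_div, le_div_iff₀ (by linarith)]
    nlinarith [pi_mul_abs_mul_norm_intervalCoeff_le a b m, Real.pi_gt_three,
      mul_nonneg (norm_nonneg (intervalCoeff a b m)) (abs_nonneg (m : ℝ))]

lemma norm_e_sub_e_le (x y : ℝ) : ‖e x - e y‖ ≤ 2 * Real.pi * |x - y| := by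
  have h_factor : e x - e y = e y * (e (x - y) - 1) := by
    rw [mul_sub, ← e_add, add_sub_cancel, mul_one]
  rw [h_factor, norm_mul, norm_e, one_mul]
  exact norm_e_sub_one_le _

lemma norm_intervalCoeff_sub_le (a b a' b' : ℝ) (m : ℤ) :
    ‖intervalCoeff a b m - intervalCoeff a' b' m‖ ≤ |a - a'| + |b - b'| := by
  rcases eq_or_ne m 0 with rfl | hm
  · rw [intervalCoeff_zero, intervalCoeff_zero, ← Complex.ofReal_sub, Complex.norm_real,
      Real.norm_eq_abs, sub_sub_sub_comm, add_comm]
    exact abs_sub _ _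
  have h_diff : 2 * Real.pi * Complex.I * m * (intervalCoeff a b m - intervalCoeff a' b' m) =
      (e (-(m * a)) - e (-(m * a'))) - (e (-(m * b)) - e (-(m * b'))) := by
    rw [mul_sub, two_pi_I_mul_mul_intervalCoeff, two_pi_I_mul_mul_intervalCoeff]
    ring
  have h_term : ∀ s t : ℝ, ‖e (-(m * s)) - e (-(m * t))‖ ≤ 2 * Real.pi * |(m : ℝ)| * |s - t| :=
    fun s t => (norm_e_sub_e_le _ _).trans_eq <| by
      rw [neg_sub_neg, ← mul_sub, abs_mul, abs_sub_comm]
      ring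
  refine le_of_mul_le_mul_left ?_ (by positivity : 0 < 2 * Real.pi * |(m : ℝ)|)
  calc 2 * Real.pi * |(m : ℝ)| * ‖intervalCoeff a b m - intervalCoeff a' b' m‖
      = ‖(e (-(m * a)) - e (-(m * a'))) - (e (-(m * b)) - e (-(m * b')))‖ := by
        rw [← h_diff]
        simp [abs_of_pos Real.pi_pos]
    _ ≤ 2 * Real.pi * |(m : ℝ)| * |a - a'| + 2 * Real.pi * |(m : ℝ)| * |b - b'| :=
        (norm_sub_le _ _).trans (add_le_add (h_term _ _) (h_term _ _))
    _ = _ := by ring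

lemma sigmaTerm_eq_intervalCoeff_pow_mul (η a b : ℝ) (N : ℕ) (m : ℤ) :
    sigmaTerm η a b N m = intervalCoeff a b m ^ 3 * e (m * η * N) := by
  rcases eq_or_ne m 0 with rfl | hm
  · simp [sigmaTerm, e_zero]
  have hm0 : (m : ℂ) ≠ 0 := by exact_mod_cast hm
  have hπ : (Real.pi : ℂ) ≠ 0 := by exact_mod_cast Real.pi_ne_zero
  set c := e (-(m * (a + b) / 2)) with hc
  have h_diff : e (-(m * a)) - e (-(m * b)) =
      c * (2 * Complex.I * Complex.sin (Real.pi * m * (b - a))) := by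
    have h_a : e (-(m * a)) = c * Complex.exp (Real.pi * m * (b - a) * Complex.I) := by
      rw [hc, e_eq_exp, e_eq_exp, ← Complex.exp_add]
      push_cast
      ring_nf
    have h_b : e (-(m * b)) = c * Complex.exp (-(Real.pi * m * (b - a)) * Complex.I) := by
      rw [hc, e_eq_exp, e_eq_exp, ← Complex.exp_add]
      push_cast
      ring_nf
    rw [mul_comm 2, mul_assoc, Complex.two_sin, h_a, h_b]
    linear_combination c * (Complex.exp (Real.pi * m * (b - a) * Complex.I) -
      Complex.exp (-(Real.pi * m * (b - a)) * Complex.I)) * Complex.I_sq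
  have h_phase : Complex.exp (2 * Real.pi * Complex.I * m * (η * N - 1.5 * (a + b))) =
      c ^ 3 * e (m * η * N) := by
    rw [hc, ← e_mul_natCast, ← e_add, e_eq_exp]
    push_cast
    ring_nf
  rw [sigmaTerm, if_neg hm, intervalCoeff, if_neg hm, h_diff, h_phase]
  push_cast
  field_simp

lemma abs_one_sub_sinc_le (x : ℝ) : |1 - sinc x| ≤ |x| := by
  wlog hx : 0 < x generalizing x
  · rcases (not_lt.1 hx).eq_or_lt with rfl | hx
    · simp
    · simpa using this (-x) (neg_pos.2 hx)
  rw [abs_of_nonneg (sub_nonneg.2 (Real.sinc_le_one x)), abs_of_pos hx]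
  rcases le_or_gt 2 x with h2 | h2
  · linarith [Real.neg_one_le_sinc x]
  · have h_cubic : 1 - x ^ 2 / 6 ≤ sinc x := by
      rw [Real.sinc_of_ne_zero hx.ne', le_div_iff₀ hx]
      linarith [Real.sin_gt_sub_cube hx]
    nlinarith

/-- The `m`-th Fourier coefficient of `trapezoid a b δ`, which is the convolution of the indicator
function of `(a, b)` with the uniform density on `(-δ, δ)`. -/
noncomputable def trapezoidCoeff (a b δ : ℝ) (m : ℤ) : ℂ :=
  (sinc (2 * Real.pi * m * δ) : ℂ) * intervalCoeff a b m

lemma norm_trapezoidCoeff_le_norm_intervalCoeff (a b δ : ℝ) (m : ℤ) :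
    ‖trapezoidCoeff a b δ m‖ ≤ ‖intervalCoeff a b m‖ := by
  rw [trapezoidCoeff, norm_mul, Complex.norm_real]
  exact mul_le_of_le_one_left (norm_nonneg _) (Real.abs_sinc_le_one _)

lemma norm_trapezoidCoeff_le {δ : ℝ} (hδ : 0 < δ) (a b : ℝ) {m : ℤ} (hm : m ≠ 0) :
    ‖trapezoidCoeff a b δ m‖ ≤ 1 / δ * |(m : ℝ)|⁻¹ ^ 2 := by
  have h_sinc : 2 * Real.pi * |(m : ℝ)| * δ * |sinc (2 * Real.pi * m * δ)| ≤ 1 := by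
    have hx : 2 * Real.pi * m * δ ≠ 0 := by positivity
    have h_abs : |2 * Real.pi * m * δ| = 2 * Real.pi * |(m : ℝ)| * δ := by
      rw [abs_mul, abs_mul, abs_of_pos Real.two_pi_pos, abs_of_pos hδ]
    rw [← h_abs, ← abs_mul, Real.sinc_of_ne_zero hx, mul_div_cancel₀ _ hx]
    exact Real.abs_sin_le_one _
  have h_mul := mul_le_one₀ h_sinc (by positivity) (pi_mul_abs_mul_norm_intervalCoeff_le a b m)
  rw [trapezoidCoeff, norm_mul, Complex.norm_real, Real.norm_eq_abs]
  rw [inv_pow, ← one_div, div_mul_div_comm, one_mul, le_div_iff₀ (by positivity)]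
  refine (le_mul_of_one_le_left (by positivity) ?_ : _ ≤ 2 * Real.pi * Real.pi * _).trans
    (le_of_eq_of_le (by ring) h_mul)
  nlinarith [Real.pi_gt_three]

lemma norm_trapezoidCoeff_sub_intervalCoeff_le {δ : ℝ} (hδ : 0 ≤ δ) (a b a' b' : ℝ) (m : ℤ) :
    ‖trapezoidCoeff a b δ m - intervalCoeff a' b' m‖ ≤ 2 * δ + (|a - a'| + |b - b'|) := by
  have h_sinc : ‖trapezoidCoeff a b δ m - intervalCoeff a b m‖ ≤ 2 * δ := by
    have h_abs : |2 * Real.pi * m * δ| = Real.pi * |(m : ℝ)| * (2 * δ) := by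
      rw [abs_mul, abs_mul, abs_of_pos Real.two_pi_pos, abs_of_nonneg hδ]
      ring
    calc ‖trapezoidCoeff a b δ m - intervalCoeff a b m‖
        = |1 - sinc (2 * Real.pi * m * δ)| * ‖intervalCoeff a b m‖ := by
          rw [trapezoidCoeff, ← sub_one_mul, norm_mul, ← Complex.ofReal_one, ← Complex.ofReal_sub,
            Complex.norm_real, Real.norm_eq_abs, abs_sub_comm]
      _ ≤ Real.pi * |(m : ℝ)| * (2 * δ) * ‖intervalCoeff a b m‖ := by
          gcongr
          exact (abs_one_sub_sinc_le _).trans_eq h_abs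
      _ = 2 * δ * (Real.pi * |(m : ℝ)| * ‖intervalCoeff a b m‖) := by ring
      _ ≤ 2 * δ := mul_le_of_le_one_right (by positivity)
          (pi_mul_abs_mul_norm_intervalCoeff_le a b m)
  exact (norm_sub_le_norm_sub_add_norm_sub _ _ _).trans
    (add_le_add h_sinc (norm_intervalCoeff_sub_le _ _ _ _ _))

/-- The `1`-periodic function equal to `1` on `[a + δ, b - δ]`, vanishing outside
`(a - δ, b + δ)`, and affine in between. -/
noncomputable def trapezoid (a b δ x : ℝ) : ℝ :=
  (|Int.fract x - (a - δ)| - |Int.fract x - (a + δ)| - |Int.fract x - (b - δ)| +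
    |Int.fract x - (b + δ)|) / (4 * δ)

section Bounds

variable {a b δ : ℝ}

lemma trapezoid_nonneg (hδ : 0 < δ) (h : a + δ ≤ b - δ) (x : ℝ) : 0 ≤ trapezoid a b δ x := by
  rw [trapezoid]
  have h_fract : |Int.fract x - (a + δ)| + |Int.fract x - (b - δ)| ≤
      |Int.fract x - (a - δ)| + |Int.fract x - (b + δ)| := by
    grind
  exact div_nonneg (by linarith) (by positivity)

lemma trapezoid_le_one (hδ : 0 < δ) (h : a + δ ≤ b - δ) (x : ℝ) : trapezoid a b δ x ≤ 1 := by
  rw [trapezoid, div_le_one (by positivity)]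
  grind

lemma trapezoid_eq_zero (hδ : 0 < δ) (h : a + δ ≤ b - δ) {x : ℝ}
    (hx : ¬(a - δ < Int.fract x ∧ Int.fract x < b + δ)) : trapezoid a b δ x = 0 := by
  rw [trapezoid, div_eq_zero_iff]
  left
  grind

lemma trapezoid_eq_one (hδ : 0 < δ) {x : ℝ} (hax : a + δ ≤ Int.fract x)
    (hxb : Int.fract x ≤ b - δ) : trapezoid a b δ x = 1 := by
  rw [trapezoid, div_eq_one_iff_eq (by positivity)]
  grind

end Bounds

lemma hasSum_bernoulliFun_two_fract (x : ℝ) :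
    HasSum (fun m : ℤ => 1 / (m : ℂ) ^ 2 * e (m * x))
      ((2 * Real.pi ^ 2 * bernoulliFun 2 (Int.fract x) : ℝ) : ℂ) := by
  have h := hasSum_one_div_pow_mul_fourier_mul_bernoulliFun (k := 2) le_rfl
    (x := Int.fract x) ⟨Int.fract_nonneg x, (Int.fract_lt_one x).le⟩
  convert h using 1
  · funext m
    have h_period : e (m * x) = e (m * Int.fract x) := by
      rw [← e_add_intCast (m * Int.fract x) (m * ⌊x⌋)]
      push_cast
      rw [← mul_add, Int.fract_add_floor]
    rw [h_period, e_eq_exp, fourier_coe_apply]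
    push_cast
    ring_nf
  · rw [mul_pow, Complex.I_sq, Nat.factorial_two]
    push_cast
    ring

lemma bernoulliFun_two_fract_sub {u : ℝ} (hu0 : 0 ≤ u) (hu1 : u < 1) (x : ℝ) :
    bernoulliFun 2 (Int.fract (x - u)) =
      (Int.fract x - u) ^ 2 - |Int.fract x - u| + 6⁻¹ := by
  have h_nonneg := Int.fract_nonneg x
  have h_lt := Int.fract_lt_one x
  have h_floor := Int.floor_add_fract x
  rw [bernoulliFun_two]
  rcases le_or_gt u (Int.fract x) with h | h
  · have h_fract : Int.fract (x - u) = Int.fract x - u :=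
      Int.fract_eq_iff.2 ⟨by linarith, by linarith, ⌊x⌋, by linarith⟩
    rw [h_fract, abs_of_nonneg (by linarith)]
  · have h_fract : Int.fract (x - u) = Int.fract x - u + 1 :=
      Int.fract_eq_iff.2 ⟨by linarith, by linarith, ⌊x⌋ - 1, by push_cast; linarith⟩
    rw [h_fract, abs_of_neg (by linarith)]
    ring

lemma trapezoid_eq_bernoulliFun {a b δ : ℝ} (hδ : 0 < δ) (ha : 0 ≤ a - δ) (hab : a + δ ≤ b - δ)
    (hb : b + δ < 1) (x : ℝ) :
    trapezoid a b δ x = (b - a) - 1 / (4 * δ) *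
      (bernoulliFun 2 (Int.fract (x - (a - δ))) - bernoulliFun 2 (Int.fract (x - (a + δ))) -
        bernoulliFun 2 (Int.fract (x - (b - δ))) + bernoulliFun 2 (Int.fract (x - (b + δ)))) := by
  rw [bernoulliFun_two_fract_sub ha (by linarith),
    bernoulliFun_two_fract_sub (by linarith) (by linarith),
    bernoulliFun_two_fract_sub (by linarith) (by linarith),
    bernoulliFun_two_fract_sub (by linarith) hb, trapezoid]
  field_simp
  ring

lemma e_sub_sub_sub_add_eq {δ : ℝ} (hδ : δ ≠ 0) (a b x : ℝ) {m : ℤ} (hm : m ≠ 0) :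
    e (m * (x - (a - δ))) - e (m * (x - (a + δ))) - e (m * (x - (b - δ))) +
        e (m * (x - (b + δ))) =
      -(8 * Real.pi ^ 2 * δ) * (m : ℂ) ^ 2 * (trapezoidCoeff a b δ m * e (m * x)) := by
  have h_sin : e (m * δ) - e (-(m * δ)) =
      2 * Complex.I * (2 * Real.pi * m * δ * (sinc (2 * Real.pi * m * δ) : ℂ)) := by
    have hx : 2 * Real.pi * m * δ ≠ 0 := by positivity
    have h_cast : (2 * Real.pi * m * δ * (sinc (2 * Real.pi * m * δ) : ℂ)) =
        Complex.sin (2 * Real.pi * m * δ) := by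
      rw [Real.sinc_of_ne_zero hx]
      push_cast
      exact mul_div_cancel₀ _ (by exact_mod_cast hx)
    rw [h_cast, mul_comm 2, mul_assoc, Complex.two_sin, e_eq_exp, e_eq_exp]
    push_cast
    ring_nf
    simp only [Complex.I_sq]
    ring_nf
  have h_split : ∀ s t : ℝ, e (m * (x - (s + t))) = e (m * x) * e (-(m * s)) * e (-(m * t)) :=
    fun s t => by
      rw [← e_add, ← e_add]
      ring_nf
  simp only [sub_eq_add_neg a δ, sub_eq_add_neg b δ, h_split, mul_neg, neg_neg]
  rw [trapezoidCoeff]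
  linear_combination e (m * x) * (e (-(m * a)) - e (-(m * b))) * h_sin -
    e (m * x) * 2 * Complex.I * (2 * Real.pi * m * δ * (sinc (2 * Real.pi * m * δ) : ℂ)) *
      two_pi_I_mul_mul_intervalCoeff a b m +
    e (m * x) * 8 * Real.pi ^ 2 * m ^ 2 * δ * (sinc (2 * Real.pi * m * δ) : ℂ) *
      intervalCoeff a b m * Complex.I_sq

lemma hasSum_trapezoidCoeff_mul_e {a b δ : ℝ} (hδ : 0 < δ) (ha : 0 ≤ a - δ)
    (hab : a + δ ≤ b - δ) (hb : b + δ < 1) (x : ℝ) :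
    HasSum (fun m : ℤ => trapezoidCoeff a b δ m * e (m * x)) (trapezoid a b δ x : ℂ) := by
  have hδ0 : (δ : ℂ) ≠ 0 := by exact_mod_cast hδ.ne'
  have hπ : (Real.pi : ℂ) ≠ 0 := by exact_mod_cast Real.pi_ne_zero
  have h_bernoulli := (((hasSum_bernoulliFun_two_fract (x - (a - δ))).sub
    (hasSum_bernoulliFun_two_fract (x - (a + δ)))).sub
    (hasSum_bernoulliFun_two_fract (x - (b - δ)))).add (hasSum_bernoulliFun_two_fract (x - (b + δ)))
  have h_sum := (hasSum_ite_eq (0 : ℤ) ((b - a : ℝ) : ℂ)).sub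
    (h_bernoulli.mul_left (1 / (8 * Real.pi ^ 2 * δ) : ℂ))
  have h_terms : ∀ m : ℤ, trapezoidCoeff a b δ m * e (m * x) =
      (if m = 0 then ((b - a : ℝ) : ℂ) else 0) - 1 / (8 * Real.pi ^ 2 * δ) *
        (1 / (m : ℂ) ^ 2 * e (m * (x - (a - δ))) - 1 / (m : ℂ) ^ 2 * e (m * (x - (a + δ))) -
          1 / (m : ℂ) ^ 2 * e (m * (x - (b - δ))) + 1 / (m : ℂ) ^ 2 * e (m * (x - (b + δ)))) := by
    intro m
    rcases eq_or_ne m 0 with rfl | hm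
    · simp [trapezoidCoeff, e_zero]
    · have hm0 : (m : ℂ) ≠ 0 := by exact_mod_cast hm
      rw [if_neg hm, ← mul_sub, ← mul_sub, ← mul_add, e_sub_sub_sub_add_eq hδ.ne' a b x hm]
      field_simp
      ring
  rw [funext h_terms]
  refine Eq.subst (motive := HasSum _) ?_ h_sum
  rw [trapezoid_eq_bernoulliFun hδ ha hab hb]
  push_cast
  field_simp
  ring

end Trapezoid

/-! ### Truncated Fourier series -/

section Truncation

/-- A summable majorant of `(max 1 |m|)⁻²`, for series over `ℤ`; the exponent `3 / 2` leaves room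
for a saving of `√M` in the tail `|m| > M`. -/
noncomputable def tailWeight (m : ℤ) : ℝ := (max 1 |(m : ℝ)|) ^ (-(3 / 2) : ℝ)

lemma tailWeight_nonneg (m : ℤ) : 0 ≤ tailWeight m := by
  rw [tailWeight]
  positivity

lemma summable_tailWeight : Summable tailWeight := by
  refine ((Real.summable_abs_int_rpow (b := 3 / 2) (by norm_num)).add
    (hasSum_ite_eq (0 : ℤ) (1 : ℝ)).summable).of_nonneg_of_le tailWeight_nonneg fun m => ?_
  rcases eq_or_ne m 0 with rfl | hm
  · simp [tailWeight]
  · have hm1 : 1 ≤ |(m : ℝ)| := by exact_mod_cast Int.one_le_abs hm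
    simp [tailWeight, hm, max_eq_right hm1]

lemma inv_max_one_abs_sq_le_tailWeight (m : ℤ) : (max 1 |(m : ℝ)|)⁻¹ ^ 2 ≤ tailWeight m := by
  rw [tailWeight, inv_pow, ← Real.rpow_natCast, ← Real.rpow_neg (by positivity)]
  exact Real.rpow_le_rpow_of_exponent_le (le_max_left _ _) (by norm_num)

lemma inv_abs_sq_le_tailWeight_div {Q : ℕ} (hQ : 0 < Q) {m : ℤ} (hm : (Q : ℤ) ^ 2 ≤ |m|) :
    |(m : ℝ)|⁻¹ ^ 2 ≤ tailWeight m / Q := by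
  have hQ0 : (0 : ℝ) < Q := by exact_mod_cast hQ
  have hm' : (Q : ℝ) ^ 2 ≤ |(m : ℝ)| := by exact_mod_cast hm
  have hm1 : 1 ≤ |(m : ℝ)| := (one_le_pow₀ (by exact_mod_cast hQ)).trans hm'
  have hm0 : 0 < |(m : ℝ)| := one_pos.trans_le hm1
  rw [tailWeight, max_eq_right hm1, le_div_iff₀ hQ0]
  calc |(m : ℝ)|⁻¹ ^ 2 * Q ≤ |(m : ℝ)| ^ (-2 : ℝ) * |(m : ℝ)| ^ (1 / 2 : ℝ) := by
        rw [Real.rpow_neg hm0.le, Real.rpow_two, inv_pow, ← Real.sqrt_eq_rpow]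
        gcongr
        exact Real.le_sqrt_of_sq_le hm'
    _ = |(m : ℝ)| ^ (-(3 / 2) : ℝ) := by
        rw [← Real.rpow_add hm0]
        norm_num

lemma norm_sub_sum_Icc_le {f : ℤ → ℂ} {s : ℂ} (hf : HasSum f s) {D : ℝ}
    (h : ∀ m ≠ 0, ‖f m‖ ≤ D * |(m : ℝ)|⁻¹ ^ 2) {Q : ℕ} (hQ : 0 < Q) :
    ‖s - ∑ m ∈ Icc (-(Q : ℤ) ^ 2) (Q ^ 2), f m‖ ≤ D / Q * ∑' m, tailWeight m := by
  set S := Icc (-(Q : ℤ) ^ 2) (Q ^ 2)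
  have hD : 0 ≤ D := by simpa using (norm_nonneg _).trans (h 1 one_ne_zero)
  have h_partial : HasSum (fun m => if m ∈ S then f m else 0) (∑ m ∈ S, f m) := by
    rw [← sum_congr rfl fun m hm => if_pos hm]
    exact hasSum_sum_of_ne_finset_zero fun m hm => if_neg hm
  refine (hf.sub h_partial).norm_le_of_bounded (summable_tailWeight.hasSum.mul_left _) fun m => ?_
  by_cases hm : m ∈ S
  · rw [if_pos hm, sub_self, norm_zero]
    exact mul_nonneg (by positivity) (tailWeight_nonneg m)
  · have hmQ : (Q : ℤ) ^ 2 ≤ |m| := by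
      by_contra! h_lt
      exact hm (mem_Icc.2 ⟨by linarith [(abs_lt.1 h_lt).1], (abs_lt.1 h_lt).2.le⟩)
    have hm0 : m ≠ 0 := abs_pos.1 ((by positivity : (0 : ℤ) < Q ^ 2).trans_le hmQ)
    rw [if_neg hm, sub_zero, div_mul_eq_mul_div, mul_div_assoc]
    exact (h m hm0).trans (mul_le_mul_of_nonneg_left (inv_abs_sq_le_tailWeight_div hQ hmQ) hD)

lemma norm_pow_three_sub_pow_three_le {x y : ℂ} {d B : ℝ} (hx : ‖x‖ ≤ B) (hy : ‖y‖ ≤ B)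
    (h : ‖x - y‖ ≤ d) : ‖x ^ 3 - y ^ 3‖ ≤ d * (3 * B ^ 2) := by
  have hB : 0 ≤ B := (norm_nonneg x).trans hx
  rw [show x ^ 3 - y ^ 3 = (x - y) * (x * x + x * y + y * y) by ring, norm_mul]
  refine mul_le_mul h ?_ (norm_nonneg _) ((norm_nonneg _).trans h)
  calc ‖x * x + x * y + y * y‖ ≤ ‖x‖ * ‖x‖ + ‖x‖ * ‖y‖ + ‖y‖ * ‖y‖ := by
        simpa only [norm_mul] using norm_add₃_le (a := x * x) (b := x * y) (c := y * y)
    _ ≤ B * B + B * B + B * B := by gcongr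
    _ = 3 * B ^ 2 := by ring

lemma norm_sigmaTerm_le {a b : ℝ} (hab : |b - a| ≤ 1) (η : ℝ) (N : ℕ) (m : ℤ) :
    ‖sigmaTerm η a b N m‖ ≤ (max 1 |(m : ℝ)|)⁻¹ ^ 2 := by
  have h_inv : (max 1 |(m : ℝ)|)⁻¹ ≤ 1 := inv_le_one_of_one_le₀ (le_max_left _ _)
  rw [sigmaTerm_eq_intervalCoeff_pow_mul, norm_mul, norm_e, mul_one, norm_pow]
  exact (pow_le_pow_left₀ (norm_nonneg _) (norm_intervalCoeff_le hab m) 3).trans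
    (pow_le_pow_of_le_one (by positivity) h_inv (by norm_num))

lemma hasSum_sigmaTerm {a b : ℝ} (hab : |b - a| ≤ 1) (η : ℝ) (N : ℕ) :
    HasSum (sigmaTerm η a b N) (sigmaSeries η a b N) :=
  (Summable.of_norm_bounded summable_tailWeight fun m =>
    (norm_sigmaTerm_le hab η N m).trans (inv_max_one_abs_sq_le_tailWeight m)).hasSum

lemma norm_sum_trapezoidCoeff_pow_sub_sigmaSeries_le {a b a' b' δ : ℝ} (hδ : 0 ≤ δ)
    (hab : |b - a| ≤ 1) (hab' : |b' - a'| ≤ 1) (ha : |a' - a| ≤ δ) (hb : |b' - b| ≤ δ)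
    (η : ℝ) (N : ℕ) {Q : ℕ} (hQ : 0 < Q) :
    ‖(∑ m ∈ Icc (-(Q : ℤ) ^ 2) (Q ^ 2), trapezoidCoeff a' b' δ m ^ 3 * e (m * η * N)) -
      sigmaSeries η a b N‖ ≤ (12 * δ + 1 / Q) * ∑' m, tailWeight m := by
  set S := Icc (-(Q : ℤ) ^ 2) (Q ^ 2)
  have h_term : ∀ m : ℤ, ‖trapezoidCoeff a' b' δ m ^ 3 * e (m * η * N) - sigmaTerm η a b N m‖ ≤
      12 * δ * tailWeight m := fun m => by
    rw [sigmaTerm_eq_intervalCoeff_pow_mul, ← sub_mul, norm_mul, norm_e, mul_one]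
    calc ‖trapezoidCoeff a' b' δ m ^ 3 - intervalCoeff a b m ^ 3‖
        ≤ (2 * δ + (δ + δ)) * (3 * (max 1 |(m : ℝ)|)⁻¹ ^ 2) :=
          norm_pow_three_sub_pow_three_le
            ((norm_trapezoidCoeff_le_norm_intervalCoeff _ _ _ _).trans
              (norm_intervalCoeff_le hab' m))
            (norm_intervalCoeff_le hab m)
            ((norm_trapezoidCoeff_sub_intervalCoeff_le hδ _ _ _ _ m).trans (by gcongr))
      _ = 12 * δ * (max 1 |(m : ℝ)|)⁻¹ ^ 2 := by ring
      _ ≤ 12 * δ * tailWeight m := by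
          gcongr
          exact inv_max_one_abs_sq_le_tailWeight m
  have h_sum : ‖(∑ m ∈ S, trapezoidCoeff a' b' δ m ^ 3 * e (m * η * N)) -
      ∑ m ∈ S, sigmaTerm η a b N m‖ ≤ 12 * δ * ∑' m, tailWeight m := by
    rw [← sum_sub_distrib]
    refine (norm_sum_le_of_le _ fun m _ => h_term m).trans ?_
    rw [← mul_sum]
    gcongr
    exact summable_tailWeight.sum_le_tsum _ fun m _ => tailWeight_nonneg m
  have h_tail : ‖sigmaSeries η a b N - ∑ m ∈ S, sigmaTerm η a b N m‖ ≤
      1 / Q * ∑' m, tailWeight m := by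
    refine norm_sub_sum_Icc_le (hasSum_sigmaTerm hab η N) (fun m hm => ?_) hQ
    have hm1 : 1 ≤ |(m : ℝ)| := by exact_mod_cast Int.one_le_abs hm
    simpa [max_eq_right hm1] using norm_sigmaTerm_le hab η N m
  rw [add_mul]
  rw [norm_sub_rev] at h_tail
  exact (norm_sub_le_norm_sub_add_norm_sub _ _ _).trans (add_le_add h_sum h_tail)

end Truncation

/-! ### Weighted counts of ternary representations -/

section Weighted

open Filter

/-- The ternary representations `N = p₁ + p₂ + p₃` counted with weight `w(ηp₁)w(ηp₂)w(ηp₃)`.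
Real weights serve for comparison with `J31`, complex ones for Fourier expansion. -/
noncomputable def weightedCount {R : Type*} [CommSemiring R] (N : ℕ) (η : ℝ) (w : ℝ → R) : R :=
  ∑ t ∈ ternaryReps N, w (η * t.1) * w (η * t.2.1) * w (η * t.2.2)

lemma ofReal_weightedCount (N : ℕ) (η : ℝ) (w : ℝ → ℝ) :
    ((weightedCount N η w : ℝ) : ℂ) = weightedCount N η fun x => (w x : ℂ) := by
  simp [weightedCount]

lemma weightedCount_mono {N : ℕ} {η : ℝ} {f g : ℝ → ℝ} (hf : 0 ≤ f) (hfg : f ≤ g) :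
    weightedCount N η f ≤ weightedCount N η g := by
  refine sum_le_sum fun t _ => ?_
  have h_mul := mul_le_mul (hfg (η * t.1)) (hfg (η * t.2.1)) (hf _) ((hf _).trans (hfg _))
  exact mul_le_mul h_mul (hfg _) (hf _) (mul_nonneg ((hf _).trans (hfg _)) ((hf _).trans (hfg _)))

lemma natCast_J31 (η a b : ℝ) (N : ℕ) : (J31 η a b N : ℝ) =
    weightedCount N η fun x => if a < Int.fract x ∧ Int.fract x < b then 1 else 0 := by
  rw [J31, weightedCount, ternaryReps, natCast_card_filter, sum_filter]
  refine sum_congr rfl fun t _ => ?_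
  simp only [ite_and, mul_ite, mul_one, mul_zero]
  split_ifs <;> rfl

lemma norm_mul_mul_sub_mul_mul_le {x₁ x₂ x₃ y₁ y₂ y₃ : ℂ} {ε : ℝ} (hε : ε ≤ 1)
    (hx₁ : ‖x₁‖ ≤ 1) (hx₂ : ‖x₂‖ ≤ 1) (hx₃ : ‖x₃‖ ≤ 1) (h₁ : ‖x₁ - y₁‖ ≤ ε)
    (h₂ : ‖x₂ - y₂‖ ≤ ε) (h₃ : ‖x₃ - y₃‖ ≤ ε) :
    ‖x₁ * x₂ * x₃ - y₁ * y₂ * y₃‖ ≤ 7 * ε := by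
  have h_two : ∀ x y : ℂ, ‖x‖ ≤ 1 → ‖x - y‖ ≤ ε → ‖y‖ ≤ 2 := fun x y hx h => by
    linarith [norm_le_norm_add_norm_sub x y]
  have hy₁ := h_two _ _ hx₁ h₁
  have hy₂ := h_two _ _ hx₂ h₂
  have h_telescope : x₁ * x₂ * x₃ - y₁ * y₂ * y₃ =
      (x₁ - y₁) * x₂ * x₃ + y₁ * (x₂ - y₂) * x₃ + y₁ * y₂ * (x₃ - y₃) := by ring
  have hε0 : 0 ≤ ε := (norm_nonneg _).trans h₁
  rw [h_telescope]
  calc _ ≤ ‖x₁ - y₁‖ * ‖x₂‖ * ‖x₃‖ + ‖y₁‖ * ‖x₂ - y₂‖ * ‖x₃‖ + ‖y₁‖ * ‖y₂‖ * ‖x₃ - y₃‖ := by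
        simpa only [norm_mul] using norm_add₃_le (a := (x₁ - y₁) * x₂ * x₃)
          (b := y₁ * (x₂ - y₂) * x₃) (c := y₁ * y₂ * (x₃ - y₃))
    _ ≤ ε * 1 * 1 + 2 * ε * 1 + 2 * 2 * ε := by gcongr
    _ = 7 * ε := by ring

lemma norm_weightedCount_sub_le {f g : ℝ → ℂ} {ε : ℝ} (hε : ε ≤ 1) (hf : ∀ x, ‖f x‖ ≤ 1)
    (hfg : ∀ x, ‖f x - g x‖ ≤ ε) (N : ℕ) (η : ℝ) :
    ‖weightedCount N η f - weightedCount N η g‖ ≤ #(ternaryReps N) * (7 * ε) := by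
  rw [weightedCount, weightedCount, ← sum_sub_distrib, ← nsmul_eq_mul]
  exact (norm_sum_le _ _).trans <| sum_le_card_nsmul _ _ _ fun t _ =>
    norm_mul_mul_sub_mul_mul_le hε (hf _) (hf _) (hf _) (hfg _) (hfg _) (hfg _)

lemma weightedCount_sum_mul_e (N : ℕ) (η : ℝ) (S : Finset ℤ) (c : ℤ → ℂ) :
    weightedCount N η (fun x => ∑ m ∈ S, c m * e (m * x)) =
      ∑ m₁ ∈ S, ∑ m₂ ∈ S, ∑ m₃ ∈ S,
        c m₁ * c m₂ * c m₃ * twistedCount N (m₁ * η) (m₂ * η) (m₃ * η) := by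
  have h_expand : ∀ t : ℕ × ℕ × ℕ, (∑ m ∈ S, c m * e (m * (η * t.1))) *
      (∑ m ∈ S, c m * e (m * (η * t.2.1))) * (∑ m ∈ S, c m * e (m * (η * t.2.2))) =
      ∑ m₁ ∈ S, ∑ m₂ ∈ S, ∑ m₃ ∈ S, c m₁ * c m₂ * c m₃ *
        (e (m₁ * η * t.1) * e (m₂ * η * t.2.1) * e (m₃ * η * t.2.2)) := fun t => by
    rw [sum_mul_sum, sum_mul]
    refine sum_congr rfl fun m₁ _ => ?_
    rw [sum_mul]
    refine sum_congr rfl fun m₂ _ => ?_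
    rw [mul_sum]
    refine sum_congr rfl fun m₃ _ => ?_
    rw [← mul_assoc (m₁ : ℝ), ← mul_assoc (m₂ : ℝ), ← mul_assoc (m₃ : ℝ)]
    ring
  rw [weightedCount, sum_congr rfl fun t _ => h_expand t]
  simp only [twistedCount, mul_sum]
  rw [sum_comm]
  refine sum_congr rfl fun m₁ _ => ?_
  rw [sum_comm]
  exact sum_congr rfl fun m₂ _ => sum_comm

lemma norm_sum_sum_sum_sub_sum_diag_le {ι E : Type*} [SeminormedAddCommGroup E]
    {S : Finset ι} {F : ι → ι → ι → E} {D : ℝ} (hD : 0 ≤ D)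
    (h : ∀ i ∈ S, ∀ j ∈ S, ∀ k ∈ S, ¬(i = j ∧ j = k) → ‖F i j k‖ ≤ D) :
    ‖(∑ i ∈ S, ∑ j ∈ S, ∑ k ∈ S, F i j k) - ∑ i ∈ S, F i i i‖ ≤ (#S : ℝ) ^ 3 * D := by
  classical
  have h_diag : ∀ i ∈ S, F i i i =
      ∑ j ∈ S, ∑ k ∈ S, if i = j ∧ j = k then F i j k else 0 := fun i hi => by
    simp [ite_and, hi]
  rw [sum_congr rfl h_diag]
  simp only [← sum_sub_distrib]
  calc _ ≤ ∑ _ ∈ S, ∑ _ ∈ S, ∑ _ ∈ S, D :=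
        norm_sum_le_of_le _ fun i hi => norm_sum_le_of_le _ fun j hj =>
          norm_sum_le_of_le _ fun k hk => by
            split_ifs with h_eq
            · simpa using hD
            · simpa using h i hi j hj k hk h_eq
    _ = (#S : ℝ) ^ 3 * D := by
        simp only [sum_const, nsmul_eq_mul]
        ring

lemma norm_weightedCount_sum_mul_e_sub_le {N : ℕ} {η : ℝ} {S : Finset ℤ} {c : ℤ → ℂ} {D : ℝ}
    (hc : ∀ m, ‖c m‖ ≤ 1) (hD : 0 ≤ D)
    (h : ∀ m₁ ∈ S, ∀ m₂ ∈ S, ∀ m₃ ∈ S, ¬(m₁ = m₂ ∧ m₂ = m₃) →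
      ‖twistedCount N (m₁ * η) (m₂ * η) (m₃ * η)‖ ≤ D) :
    ‖weightedCount N η (fun x => ∑ m ∈ S, c m * e (m * x)) -
      #(ternaryReps N) * ∑ m ∈ S, c m ^ 3 * e (m * η * N)‖ ≤ (#S : ℝ) ^ 3 * D := by
  have h_diag : #(ternaryReps N) * ∑ m ∈ S, c m ^ 3 * e (m * η * N) =
      ∑ m ∈ S, c m * c m * c m * twistedCount N (m * η) (m * η) (m * η) := by
    rw [mul_sum]
    refine sum_congr rfl fun m _ => ?_
    rw [twistedCount_self]
    ring
  rw [weightedCount_sum_mul_e, h_diag]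
  refine norm_sum_sum_sum_sub_sum_diag_le hD fun m₁ h₁ m₂ h₂ m₃ h₃ h_ne => ?_
  rw [norm_mul, norm_mul, norm_mul]
  have h_coeff : ‖c m₁‖ * ‖c m₂‖ * ‖c m₃‖ ≤ 1 :=
    mul_le_one₀ (mul_le_one₀ (hc _) (norm_nonneg _) (hc _)) (norm_nonneg _) (hc _)
  exact (mul_le_of_le_one_left (norm_nonneg _) h_coeff).trans (h m₁ h₁ m₂ h₂ m₃ h₃ h_ne)

lemma card_Icc_neg_sq_le {Q : ℕ} (hQ : 0 < Q) : #(Icc (-(Q : ℤ) ^ 2) (Q ^ 2)) ≤ 3 * Q ^ 2 := by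
  have hQ2 : 1 ≤ Q ^ 2 := Nat.one_le_pow _ _ hQ
  rw [Int.card_Icc]
  push_cast [Int.toNat_le]
  linarith [(by exact_mod_cast hQ2 : (1 : ℤ) ≤ Q ^ 2)]

lemma norm_trapezoid_sub_sum_le {a b δ : ℝ} (hδ : 0 < δ) (ha : 0 ≤ a - δ)
    (hab : a + δ ≤ b - δ) (hb : b + δ < 1) {Q : ℕ} (hQ : 0 < Q) (x : ℝ) :
    ‖(trapezoid a b δ x : ℂ) - ∑ m ∈ Icc (-(Q : ℤ) ^ 2) (Q ^ 2),
      trapezoidCoeff a b δ m * e (m * x)‖ ≤ 1 / δ / Q * ∑' m, tailWeight m := by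
  refine norm_sub_sum_Icc_le (hasSum_trapezoidCoeff_mul_e hδ ha hab hb x) (fun m hm => ?_) hQ
  rw [norm_mul, norm_e, mul_one]
  exact norm_trapezoidCoeff_le hδ a b hm

lemma norm_trapezoidCoeff_le_one {a b : ℝ} (hab : |b - a| ≤ 1) (δ : ℝ) (m : ℤ) :
    ‖trapezoidCoeff a b δ m‖ ≤ 1 :=
  (norm_trapezoidCoeff_le_norm_intervalCoeff a b δ m).trans <|
    (norm_intervalCoeff_le hab m).trans (inv_le_one_of_one_le₀ (le_max_left _ _))

lemma norm_weightedCount_trapezoid_sub_le {N Q : ℕ} {η a b a' b' δ D : ℝ} (hδ : 0 < δ)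
    (ha : |a' - a| ≤ δ) (hb : |b' - b| ≤ δ) (hab : |b - a| ≤ 1)
    (ha' : 0 ≤ a' - δ) (hab' : a' + δ ≤ b' - δ) (hb' : b' + δ < 1) (hQ : 0 < Q)
    (hQδ : 1 / δ / Q * ∑' m, tailWeight m ≤ 1) (hD : 0 ≤ D)
    (h_twisted : ∀ m₁ m₂ m₃ : ℤ, ¬(m₁ = m₂ ∧ m₂ = m₃) → m₁.natAbs ≤ Q ^ 2 → m₂.natAbs ≤ Q ^ 2 →
      m₃.natAbs ≤ Q ^ 2 → ‖twistedCount N (m₁ * η) (m₂ * η) (m₃ * η)‖ ≤ D) :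
    ‖weightedCount N η (fun x => (trapezoid a' b' δ x : ℂ)) -
        #(ternaryReps N) * sigmaSeries η a b N‖ ≤
      N ^ 2 * ((7 / (δ * Q) + 12 * δ + 1 / Q) * ∑' m, tailWeight m) + (3 * Q ^ 2) ^ 3 * D := by
  have hba' : |b' - a'| ≤ 1 := abs_le.2 ⟨by linarith, by linarith⟩
  set S := Icc (-(Q : ℤ) ^ 2) (Q ^ 2)
  set W := ∑' m, tailWeight m
  set main := ∑ m ∈ S, trapezoidCoeff a' b' δ m ^ 3 * e (m * η * N)
  have h_reps : (#(ternaryReps N) : ℝ) ≤ N ^ 2 := by exact_mod_cast card_ternaryReps_le N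
  have hS_card : (#S : ℝ) ≤ 3 * Q ^ 2 := by exact_mod_cast card_Icc_neg_sq_le hQ
  have hS_natAbs : ∀ m ∈ S, m.natAbs ≤ Q ^ 2 := fun m hm => by
    have h := abs_le.2 ⟨by linarith [(mem_Icc.1 hm).1], (mem_Icc.1 hm).2⟩
    rw [Int.abs_eq_natAbs] at h
    exact_mod_cast h
  have h_trunc := norm_weightedCount_sub_le hQδ (fun x => by
    rw [Complex.norm_real, Real.norm_of_nonneg (trapezoid_nonneg hδ hab' x)]
    exact trapezoid_le_one hδ hab' x) (norm_trapezoid_sub_sum_le hδ ha' hab' hb' hQ) N η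
  have h_offdiag : _ ≤ (#S : ℝ) ^ 3 * D := norm_weightedCount_sum_mul_e_sub_le
    (norm_trapezoidCoeff_le_one hba' δ) hD fun m₁ h₁ m₂ h₂ m₃ h₃ h_ne =>
      h_twisted m₁ m₂ m₃ h_ne (hS_natAbs _ h₁) (hS_natAbs _ h₂) (hS_natAbs _ h₃)
  have h_sigma : ‖#(ternaryReps N) * main - #(ternaryReps N) * sigmaSeries η a b N‖ ≤
      #(ternaryReps N) * ((12 * δ + 1 / Q) * W) := by
    rw [← mul_sub, norm_mul, Complex.norm_natCast]
    gcongr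
    exact norm_sum_trapezoidCoeff_pow_sub_sigmaSeries_le hδ.le hab hba' ha hb η N hQ
  calc _ ≤ #(ternaryReps N) * (7 * (1 / δ / Q * W)) + ((#S : ℝ) ^ 3 * D +
        #(ternaryReps N) * ((12 * δ + 1 / Q) * W)) :=
        (norm_sub_le_norm_sub_add_norm_sub _ _ _).trans <| add_le_add h_trunc <|
          (norm_sub_le_norm_sub_add_norm_sub _ _ _).trans <| add_le_add h_offdiag h_sigma
    _ = #(ternaryReps N) * ((7 / (δ * Q) + 12 * δ + 1 / Q) * W) + (#S : ℝ) ^ 3 * D := by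
        ring
    _ ≤ _ := by
        have hW : 0 ≤ W := tsum_nonneg tailWeight_nonneg
        gcongr

lemma tendsto_logCeil : Tendsto (fun N => (logCeil N : ℝ)) atTop atTop :=
  tendsto_atTop_mono
    (fun N => (le_add_of_nonneg_left zero_le_one).trans (one_add_log_le_logCeil N))
    (Real.tendsto_log_atTop.comp tendsto_natCast_atTop_atTop)

/-- The parameters are chosen so that truncation, sharp-to-smooth comparison and the off-diagonal
terms all lose the same factor `logCeil N ^ c`. -/
lemma exists_eventually_norm_weightedCount_trapezoid_sub_le {η a b δ₀ : ℝ} (hη : Irrational η)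
    (hη' : ¬Liouville η) (hδ₀ : 0 < δ₀) (ha : 0 ≤ a - 2 * δ₀) (hab : a + 2 * δ₀ ≤ b - 2 * δ₀)
    (hb : b + 2 * δ₀ < 1) {c : ℕ} (hc : c ≠ 0) :
    ∃ K, ∀ᶠ N : ℕ in atTop, ∀ δ a' b', δ = δ₀ / (logCeil N : ℝ) ^ c → |a' - a| ≤ δ →
      |b' - b| ≤ δ →
      ‖weightedCount N η (fun x => (trapezoid a' b' δ x : ℂ)) -
        #(ternaryReps N) * sigmaSeries η a b N‖ ≤ K * (N ^ 2 / (logCeil N : ℝ) ^ c) := by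
  set W := ∑' m, tailWeight m
  have hW : 0 ≤ W := tsum_nonneg tailWeight_nonneg
  refine ⟨(7 / δ₀ + 12 * δ₀ + 1) * W + 2430, ?_⟩
  filter_upwards [((tendsto_pow_atTop hc).comp tendsto_logCeil).eventually_ge_atTop (W / δ₀),
    eventually_norm_twistedCount_le hη hη' (13 * c) (4 * c)] with N hP h_twisted δ a' b' hδ ha' hb'
  have hP1 : 1 ≤ logCeil N ^ c := Nat.one_le_pow _ _ (one_le_logCeil N)
  rw [Function.comp_apply] at hP
  rw [mul_comm 13, mul_comm 4, pow_mul, pow_mul] at h_twisted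
  rw [← Nat.cast_pow (logCeil N) c] at hδ hP h_twisted ⊢
  generalize logCeil N ^ c = P at hδ hP hP1 h_twisted ⊢
  have hP1' : (1 : ℝ) ≤ P := by exact_mod_cast hP1
  have hP0 : (0 : ℝ) < P := one_pos.trans_le hP1'
  have hδ_pos : 0 < δ := hδ ▸ by positivity
  have hδ_le : δ ≤ δ₀ := hδ ▸ div_le_self hδ₀.le hP1'
  have ha'' := abs_le.1 ha'
  have hb'' := abs_le.1 hb'
  have hQδ : 1 / δ / (P ^ 2 : ℕ) * W ≤ 1 := by
    calc _ = W / δ₀ / P := by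
          rw [hδ]
          push_cast
          field_simp
      _ ≤ 1 := (div_le_one hP0).2 hP
  refine (norm_weightedCount_trapezoid_sub_le (Q := P ^ 2) (D := 90 * N ^ 2 / (P : ℝ) ^ 13) hδ_pos
    ha' hb' (abs_le.2 ⟨by linarith, by linarith⟩) (by linarith) (by linarith) (by linarith)
    (by positivity) hQδ (by positivity) fun m₁ m₂ m₃ h_ne h₁ h₂ h₃ => ?_).trans ?_
  · rw [← pow_mul] at h₁ h₂ h₃
    exact h_twisted m₁ m₂ m₃ h_ne h₁ h₂ h₃
  · rw [hδ]
    push_cast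
    calc _ ≤ N ^ 2 * ((7 / (δ₀ / P * P ^ 2) + 12 * (δ₀ / P) + 1 / P) * W) +
          (3 * ((P : ℝ) ^ 2) ^ 2) ^ 3 * (90 * N ^ 2 / (P : ℝ) ^ 13) := by
          gcongr
          exact le_self_pow₀ hP1' two_ne_zero
      _ = ((7 / δ₀ + 12 * δ₀ + 1) * W + 2430) * (N ^ 2 / P) := by
          field_simp
          ring

end Weighted

/-! ### Comparison with the sharp cutoff -/

section Sharp

open Filter

variable {η a b δ : ℝ}

lemma trapezoid_le_ite (hδ : 0 < δ) (h : a + δ + δ ≤ b - δ - δ) (x : ℝ) :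
    trapezoid (a + δ) (b - δ) δ x ≤ if a < Int.fract x ∧ Int.fract x < b then 1 else 0 := by
  split_ifs with hx
  · exact trapezoid_le_one hδ h x
  · exact (trapezoid_eq_zero hδ h (by simpa using hx)).le

lemma ite_le_trapezoid (hδ : 0 < δ) (h : a - δ + δ ≤ b + δ - δ) (x : ℝ) :
    (if a < Int.fract x ∧ Int.fract x < b then 1 else 0) ≤ trapezoid (a - δ) (b + δ) δ x := by
  split_ifs with hx
  · exact (trapezoid_eq_one hδ (by linarith [hx.1]) (by linarith [hx.2])).ge
  · exact trapezoid_nonneg hδ h x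

lemma weightedCount_trapezoid_le_J31 (hδ : 0 < δ) (h : a + δ + δ ≤ b - δ - δ) (N : ℕ) :
    weightedCount N η (trapezoid (a + δ) (b - δ) δ) ≤ J31 η a b N := by
  rw [natCast_J31]
  exact weightedCount_mono (trapezoid_nonneg hδ h) (trapezoid_le_ite hδ h)

lemma J31_le_weightedCount_trapezoid (hδ : 0 < δ) (h : a - δ + δ ≤ b + δ - δ) (N : ℕ) :
    J31 η a b N ≤ weightedCount N η (trapezoid (a - δ) (b + δ) δ) := by
  rw [natCast_J31]
  refine weightedCount_mono (fun x => ?_) (ite_le_trapezoid hδ h)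
  positivity

lemma norm_ofReal_sub_le_of_le_of_le {l x u B : ℝ} {z : ℂ} (hl : l ≤ x) (hu : x ≤ u)
    (hlz : ‖(l : ℂ) - z‖ ≤ B) (huz : ‖(u : ℂ) - z‖ ≤ B) : ‖(x : ℂ) - z‖ ≤ 3 * B := by
  have h_gap : u - l ≤ B + B := by
    have h := norm_sub_le_norm_sub_add_norm_sub (u : ℂ) z l
    rw [norm_sub_rev z, ← Complex.ofReal_sub, Complex.norm_real] at h
    linarith [Real.le_norm_self (u - l)]
  have h_xl : ‖(x : ℂ) - l‖ ≤ B + B := by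
    rw [← Complex.ofReal_sub, Complex.norm_real, Real.norm_of_nonneg (sub_nonneg.2 hl)]
    linarith
  linarith [norm_sub_le_norm_sub_add_norm_sub (x : ℂ) l z]

lemma exists_eventually_norm_J31_sub_le (hη : Irrational η) (hη' : ¬Liouville η) (ha : 0 < a)
    (hab : a < b) (hb : b < 1) {c : ℕ} (hc : c ≠ 0) :
    ∃ K, ∀ᶠ N : ℕ in atTop, ‖(J31 η a b N : ℂ) - I31 N * sigmaSeries η a b N‖ ≤
      K * (N ^ 2 / (logCeil N : ℝ) ^ c) := by
  obtain ⟨δ₀, hδ₀, h_a, h_ab, h_b⟩ :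
      ∃ δ₀ > 0, 2 * δ₀ ≤ a ∧ 2 * δ₀ ≤ (b - a) / 2 ∧ 2 * δ₀ ≤ (1 - b) / 2 := by
    refine ⟨min (min (a / 2) ((b - a) / 4)) ((1 - b) / 4), ?_, ?_, ?_, ?_⟩ <;> grind
  obtain ⟨K, hK⟩ := exists_eventually_norm_weightedCount_trapezoid_sub_le hη hη' hδ₀
    (by linarith : 0 ≤ a - 2 * δ₀) (by linarith : a + 2 * δ₀ ≤ b - 2 * δ₀) (by linarith) hc
  refine ⟨3 * K, ?_⟩
  filter_upwards [hK] with N hN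
  have hL : (1 : ℝ) ≤ (logCeil N : ℝ) ^ c := one_le_pow₀ (by exact_mod_cast one_le_logCeil N)
  set δ := δ₀ / (logCeil N : ℝ) ^ c
  have hδ : 0 < δ := by positivity
  have hδ_le : δ ≤ δ₀ := div_le_self hδ₀.le hL
  have h_lower := hN δ (a + δ) (b - δ) rfl (by simp [abs_of_pos hδ]) (by simp [abs_of_pos hδ])
  have h_upper := hN δ (a - δ) (b + δ) rfl (by simp [abs_of_pos hδ]) (by simp [abs_of_pos hδ])
  rw [← ofReal_weightedCount] at h_lower h_upper
  rw [mul_assoc 3]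
  exact norm_ofReal_sub_le_of_le_of_le (weightedCount_trapezoid_le_J31 hδ (by linarith) N)
    (J31_le_weightedCount_trapezoid hδ (by linarith) N) h_lower h_upper

lemma inv_logCeil_pow_le {N : ℕ} (hN : 2 ≤ N) {C : ℝ} (hC : 0 ≤ C) {c : ℕ} (hCc : C ≤ c) :
    ((logCeil N : ℝ) ^ c)⁻¹ ≤ Real.log N ^ (-C) := by
  have h_log : 0 < Real.log N := Real.log_pos (by exact_mod_cast hN)
  have h_le : Real.log N ≤ logCeil N := by linarith [one_add_log_le_logCeil N]
  rw [Real.rpow_neg h_log.le]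
  refine inv_anti₀ (Real.rpow_pos_of_pos h_log C) ?_
  calc Real.log N ^ C ≤ (logCeil N : ℝ) ^ C := by gcongr
    _ ≤ (logCeil N : ℝ) ^ (c : ℝ) :=
        Real.rpow_le_rpow_of_exponent_le (by exact_mod_cast one_le_logCeil N) hCc
    _ = (logCeil N : ℝ) ^ c := Real.rpow_natCast _ _

lemma isBigO_J31_sub (hη : Irrational η) (hη' : ¬Liouville η) (ha : 0 < a) (hab : a < b)
    (hb : b < 1) {C : ℝ} (hC : 0 < C) :
    (fun N => (J31 η a b N : ℂ) - I31 N * sigmaSeries η a b N) =O[atTop]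
      fun N : ℕ => (N : ℝ) ^ 2 * Real.log N ^ (-C) := by
  obtain ⟨K, hK⟩ := exists_eventually_norm_J31_sub_le hη hη' ha hab hb
    (Nat.ceil_pos.2 hC).ne'
  refine (Asymptotics.IsBigO.of_bound K (g := fun N : ℕ =>
    (N : ℝ) ^ 2 / (logCeil N : ℝ) ^ ⌈C⌉₊) ?_).trans (Asymptotics.IsBigO.of_bound' ?_)
  · filter_upwards [hK] with N hN
    rwa [Real.norm_of_nonneg (by positivity)]
  · filter_upwards [eventually_ge_atTop 2] with N hN
    rw [Real.norm_of_nonneg (by positivity), Real.norm_of_nonneg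
      (mul_nonneg (by positivity) (Real.rpow_nonneg (Real.log_natCast_nonneg N) _)), div_eq_mul_inv]
    gcongr
    exact inv_logCeil_pow_le hN hC.le (Nat.le_ceil C)

end Sharp

open Polynomial in
lemma isAlgebraic_of_isQuadraticIrrational {η : ℝ} (hη : IsQuadraticIrrational η) :
    IsAlgebraic ℤ η := by
  obtain ⟨-, A, B, C, hA, h_root⟩ := hη
  refine ⟨Polynomial.C A * X ^ 2 + Polynomial.C B * X + Polynomial.C C, ?_, ?_⟩
  · exact ne_zero_of_natDegree_gt (n := 1) (by rw [natDegree_quadratic hA]; exact one_lt_two)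
  · simpa using h_root

end TernaryGoldbach

open TernaryGoldbach in
theorem ternary_goldbach_special_primes_general (η : ℝ) (hη : Irrational η) (hη' : ¬Liouville η)
    (a b : ℝ) (ha : 0 < a) (hab : a < b) (hb : b < 1) (C : ℝ) (hC : 0 < C) :
    ∃ K > 0, ∀ N : ℕ, 2 ≤ N →
      ‖(J31 η a b N : ℂ) - (I31 N : ℂ) * sigmaSeries η a b N‖ ≤
        K * (N : ℝ) ^ 2 * Real.log N ^ (-C) := by
  obtain ⟨K, hK0, hK⟩ := Asymptotics.bound_of_isBigO_nat_atTop
    (isBigO_J31_sub hη hη' ha hab hb hC)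
  refine ⟨K, hK0, fun N hN => ?_⟩
  have h_pos : 0 < (N : ℝ) ^ 2 * Real.log N ^ (-C) :=
    mul_pos (by positivity) (Real.rpow_pos_of_pos (Real.log_pos (by exact_mod_cast hN)) _)
  rw [mul_assoc, ← Real.norm_of_nonneg h_pos.le]
  exact hK h_pos.ne'

theorem ternary_goldbach_special_primes (η : ℝ) (hη : IsQuadraticIrrational η)
    (a b : ℝ) (ha : 0 < a) (hab : a < b) (hb : b < 1) (C : ℝ) (hC : 0 < C) :
    ∃ K > 0, ∀ N : ℕ, 2 ≤ N →
      ‖(J31 η a b N : ℂ) - (I31 N : ℂ) * sigmaSeries η a b N‖ ≤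
        K * (N : ℝ) ^ 2 * Real.log N ^ (-C) :=
  ternary_goldbach_special_primes_general η hη.1
    (fun h => h.transcendental (TernaryGoldbach.isAlgebraic_of_isQuadraticIrrational hη))
    a b ha hab hb C hC
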